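/- arXiv:1302.3859 — 2 statements merged into one kernel-verified Lean document; each statement's English description precedes it below -/
import Mathlib

section
/- Let d, k ∈ ℕ, let B be a positive semidefinite d×d complex matrix, and let a = (a_1,…,a_k) ∈ ℝ_{>0}^k. Then there exists a sequence G = (g_1,…,g_k) of vectors in ℂ^d with frame operator S_G = B and ‖g_i‖² = a_i for every i ∈ {1,…,k} if and only if a ≺ λ(B), where the two vectors are compared by padding the shorter one with zeros. -/
open Finset
open scoped ComplexOrder

noncomputable def sortAsc {m : ℕ} (x : Fin m → ℝ) : Fin m → ℝ :=
  x ∘ Tuple.sort x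

noncomputable def sortDesc {m : ℕ} (x : Fin m → ℝ) : Fin m → ℝ :=
  fun i => (x ∘ Tuple.sort x) i.rev

noncomputable def pad {k : ℕ} (x : Fin k → ℝ) (m : ℕ) : Fin m → ℝ :=
  fun i => if h : (i : ℕ) < k then x ⟨i, h⟩ else 0

/-- `MajorizedBy x y` means `x ≺ y`. -/
def MajorizedBy {m : ℕ} (x y : Fin m → ℝ) : Prop :=
  (∀ j : Fin m, ∑ i ∈ Finset.Iic j, sortDesc x i ≤ ∑ i ∈ Finset.Iic j, sortDesc y i) ∧
    ∑ i, x i = ∑ i, y i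

/-- Majorization of vectors of possibly different lengths, padding with zeros. -/
def MajorizedByPad {k m : ℕ} (x : Fin k → ℝ) (y : Fin m → ℝ) : Prop :=
  MajorizedBy (pad x (max k m)) (pad y (max k m))

/-- The frame operator `S_F = ∑ f_i f_i^*` of a finite sequence of vectors in `ℂ^d`. -/
noncomputable def frameOp {d n : ℕ} (F : Fin n → Fin d → ℂ) : Matrix (Fin d) (Fin d) ℂ :=
  ∑ l, Matrix.vecMulVec (F l) (star (F l))

/-- The squared norm `‖g‖²` of a vector in `ℂ^d`. -/
noncomputable def normSqVec {d : ℕ} (g : Fin d → ℂ) : ℝ :=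
  ∑ i, Complex.normSq (g i)

open scoped Classical in
/-- Eigenvalues of a (Hermitian) matrix arranged in decreasing order. -/
noncomputable def eigsDesc {d : ℕ} (S : Matrix (Fin d) (Fin d) ℂ) : Fin d → ℝ :=
  if h : S.IsHermitian then sortDesc h.eigenvalues else 0

open scoped Classical in
/-- Eigenvalues of a (Hermitian) matrix arranged in increasing order. -/
noncomputable def eigsAsc {d : ℕ} (S : Matrix (Fin d) (Fin d) ℂ) : Fin d → ℝ :=
  if h : S.IsHermitian then sortAsc h.eigenvalues else 0

/-- `Γ_d(a)`: non-increasing nonnegative vectors in `ℝ^d` majorizing `a`. -/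
def Gamma {k : ℕ} (d : ℕ) (a : Fin k → ℝ) : Set (Fin d → ℝ) :=
  {μ | Antitone μ ∧ (∀ i, 0 ≤ μ i) ∧ MajorizedByPad a μ}

/-- The convex potential `P_f = tr f(S) = ∑ f(λ_i(S))`. -/
noncomputable def potential {d : ℕ} (f : ℝ → ℝ) (S : Matrix (Fin d) (Fin d) ℂ) : ℝ :=
  ∑ i, f (eigsDesc S i)

/-- Final averages `Q_{j,r} = (1/(r-j)) (∑_{i=j+1}^k a_i + ∑_{i=j+1}^r λ_i)` (1-based). -/
noncomputable def finalAvg {d k : ℕ} (lam : Fin d → ℝ) (a : Fin k → ℝ) (j r : ℕ) : ℝ :=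
  ((∑ i : Fin k, if j ≤ (i : ℕ) then a i else 0) +
      (∑ i : Fin d, if j ≤ (i : ℕ) ∧ (i : ℕ) < r then lam i else 0)) / ((r : ℝ) - (j : ℝ))

/-- Initial averages: `initAvg lam a lo hi = P_{lo+1,hi}` (1-based), i.e. the average of
`h_i = λ_i + a_i` over the (0-based) index window `[lo, hi)`. -/
noncomputable def initAvg {d k : ℕ} (lam : Fin d → ℝ) (a : Fin k → ℝ) (lo hi : ℕ) : ℝ :=
  ((∑ i : Fin d, if lo ≤ (i : ℕ) ∧ (i : ℕ) < hi then lam i else 0) +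
      (∑ i : Fin k, if lo ≤ (i : ℕ) ∧ (i : ℕ) < hi then a i else 0)) / ((hi : ℝ) - (lo : ℝ))

/-- 1-based access to a vector indexed by `Fin d`. -/
noncomputable def get1 {d : ℕ} (lam : Fin d → ℝ) (i : ℕ) : ℝ :=
  if h : i - 1 < d then lam ⟨i - 1, h⟩ else 0

/-- The index `s` is feasible for the pair `(λ, a)`: the unique vector
`ν_s = (c·1_{r-s}, λ_{r+1},…,λ_d)` determined by the truncated data satisfies
`a^s ≺ ν_s - λ^s`. -/
def FeasibleIdx {d k : ℕ} (lam : Fin d → ℝ) (a : Fin k → ℝ) (s : ℕ) : Prop :=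
  ∃ r : ℕ, ∃ c : ℝ, s < r ∧ r ≤ d ∧ 0 < c ∧
    (∀ i : Fin d, s ≤ (i : ℕ) → (i : ℕ) < r → lam i ≤ c) ∧
    (∀ hrd : r < d, c ≤ lam ⟨r, hrd⟩) ∧
    ((r : ℝ) - (s : ℝ)) * c =
      (∑ i : Fin d, if s ≤ (i : ℕ) ∧ (i : ℕ) < r then lam i else 0) +
        (∑ i : Fin k, if s ≤ (i : ℕ) then a i else 0) ∧
    MajorizedByPad (fun i : Fin (k - s) => a ⟨s + (i : ℕ), by have := i.isLt; omega⟩)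
      (fun i : Fin (d - s) =>
        if s + (i : ℕ) < r then c - lam ⟨s + (i : ℕ), by have := i.isLt; omega⟩ else 0)

open Finset Matrix

/-- `x` is the vector of squared norms of a family with frame operator `S`. -/
def Realiz {d : ℕ} (S : Matrix (Fin d) (Fin d) ℂ) {m : ℕ} (x : Fin m → ℝ) : Prop :=
  ∃ F : Fin m → Fin d → ℂ, frameOp F = S ∧ ∀ i, normSqVec (F i) = x i

lemma sortDesc_perm {m : ℕ} (x : Fin m → ℝ) : ∃ σ : Equiv.Perm (Fin m), sortDesc x = x ∘ σ :=
  ⟨Fin.revPerm.trans (Tuple.sort x), by ext i; simp [sortDesc]⟩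

lemma sortDesc_antitone {m : ℕ} (x : Fin m → ℝ) : Antitone (sortDesc x) := by
  intro i j hij
  exact Tuple.monotone_sort x (Fin.rev_le_rev.mpr hij)

lemma pad_castLE {k m : ℕ} (h : k ≤ m) (x : Fin k → ℝ) (i : Fin k) :
    pad x m (Fin.castLE h i) = x i := by
  simp [pad]

lemma sum_castLE {M : Type*} [AddCommMonoid M] {k m : ℕ} (h : k ≤ m) (f : Fin m → M)
    (hf : ∀ i : Fin m, k ≤ (i : ℕ) → f i = 0) : ∑ i, f i = ∑ i : Fin k, f (Fin.castLE h i) := by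
  symm
  apply Finset.sum_of_injOn (Fin.castLE h)
  · exact (Fin.castLE_injective h).injOn
  · simp
  · intro i _ hi
    apply hf
    by_contra hk
    exact hi ⟨⟨i, by omega⟩, by simp, by ext; simp⟩
  · simp

lemma pad_zero {k m : ℕ} (x : Fin k → ℝ) (i : Fin m) (h : k ≤ (i : ℕ)) : pad x m i = 0 := by
  simp [pad, h]

lemma sum_pad {k m : ℕ} (h : k ≤ m) (x : Fin k → ℝ) : ∑ i, pad x m i = ∑ i, x i := by
  rw [sum_castLE h _ (fun i hi => pad_zero x i hi)]
  simp [pad_castLE]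

lemma Realiz.perm {d m : ℕ} {S : Matrix (Fin d) (Fin d) ℂ} {x : Fin m → ℝ} (hx : Realiz S x)
    (σ : Equiv.Perm (Fin m)) : Realiz S (x ∘ σ) := by
  obtain ⟨F, hF, hn⟩ := hx
  refine ⟨F ∘ σ, ?_, fun i => hn _⟩
  rw [← hF]
  exact Equiv.sum_comp σ (fun l => Matrix.vecMulVec (F l) (star (F l)))

lemma realiz_perm_iff {d m : ℕ} {S : Matrix (Fin d) (Fin d) ℂ} {x : Fin m → ℝ}
    (σ : Equiv.Perm (Fin m)) : Realiz S (x ∘ σ) ↔ Realiz S x := by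
  refine ⟨fun h => ?_, fun h => h.perm σ⟩
  have := h.perm σ⁻¹
  convert this using 1
  ext i; simp

lemma realiz_sortDesc_iff {d m : ℕ} {S : Matrix (Fin d) (Fin d) ℂ} {x : Fin m → ℝ} :
    Realiz S (sortDesc x) ↔ Realiz S x := by
  obtain ⟨σ, hσ⟩ := sortDesc_perm x
  rw [hσ, realiz_perm_iff]

lemma eq_zero_of_normSqVec {d : ℕ} (g : Fin d → ℂ) (h : normSqVec g = 0) : g = 0 := by
  unfold normSqVec at h
  rw [Finset.sum_eq_zero_iff_of_nonneg (fun i _ => Complex.normSq_nonneg _)] at h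
  ext i
  simpa using h i (Finset.mem_univ i)

lemma realiz_pad_iff {d k m : ℕ} (h : k ≤ m) {S : Matrix (Fin d) (Fin d) ℂ} {x : Fin k → ℝ} :
    Realiz S (pad x m) ↔ Realiz S x := by
  constructor
  · rintro ⟨F, hF, hn⟩
    refine ⟨fun i => F (Fin.castLE h i), ?_, fun i => by rw [hn, pad_castLE]⟩
    rw [← hF, frameOp, frameOp, sum_castLE h]
    intro i hi
    have : F i = 0 := eq_zero_of_normSqVec _ (by rw [hn, pad_zero x i hi])
    simp [this]
  · rintro ⟨F, hF, hn⟩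
    refine ⟨fun i => if hi : (i : ℕ) < k then F ⟨i, hi⟩ else 0, ?_, fun i => ?_⟩
    · rw [← hF, frameOp, frameOp, sum_castLE h]
      · simp
      · intro i hi
        simp [hi]
    · by_cases hi : (i : ℕ) < k
      · simp [hi, hn, pad]
      · simp [hi, pad, normSqVec]

lemma exists_phase (z : ℂ) : ∃ ω : ℂ, ω * star ω = 1 ∧ (ω * z).re = 0 := by
  by_cases hz : z = 0
  · exact ⟨1, by simp, by simp [hz]⟩
  · have hn : ((‖z‖ : ℝ) : ℂ) ≠ 0 := by simpa using hz
    have h2 : z * (starRingEnd ℂ) z = (‖z‖ : ℂ) ^ 2 := by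
      rw [Complex.mul_conj, Complex.normSq_eq_norm_sq]; push_cast; rfl
    refine ⟨Complex.I * star z / ‖z‖, ?_, ?_⟩
    · simp only [star_div₀, star_mul', Complex.star_def, Complex.conj_I, Complex.conj_conj,
        Complex.conj_ofReal]
      field_simp
      linear_combination h2 - (starRingEnd ℂ) z * z * Complex.I_sq
    · have : Complex.I * star z / ‖z‖ * z = Complex.I * ((‖z‖ : ℝ) : ℂ) := by
        simp only [Complex.star_def]
        field_simp
        linear_combination h2
      rw [this]; simp

lemma sum_split {m : ℕ} {M : Type*} [AddCommMonoid M] (φ : Fin m → M) {i j : Fin m} (hij : i ≠ j) :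
    ∑ l, φ l = φ i + φ j + ∑ l ∈ (univ.erase i).erase j, φ l := by
  rw [← Finset.add_sum_erase univ φ (mem_univ i),
    ← Finset.add_sum_erase (univ.erase i) φ (a := j) (by simp [hij.symm]), add_assoc]

lemma mix {d : ℕ} (f g : Fin d → ℂ) (s c : ℝ) (h : c ^ 2 + s ^ 2 = 1) :
    ∃ f' g' : Fin d → ℂ, vecMulVec f' (star f') + vecMulVec g' (star g') =
      vecMulVec f (star f) + vecMulVec g (star g) ∧
      normSqVec f' = c ^ 2 * normSqVec f + s ^ 2 * normSqVec g ∧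
      normSqVec g' = s ^ 2 * normSqVec f + c ^ 2 * normSqVec g := by
  obtain ⟨ω, hω, hre⟩ := exists_phase (∑ x, star (f x) * g x)
  have hω' : ω.re ^ 2 + ω.im ^ 2 = 1 := by
    have := congrArg Complex.re hω
    simp at this
    linarith
  have hC : (c : ℂ) ^ 2 + (s : ℂ) ^ 2 = 1 := by exact_mod_cast h
  have key : ∀ α β : ℝ, normSqVec (fun x => (α : ℂ) * f x + β * (ω * g x)) =
      α ^ 2 * normSqVec f + β ^ 2 * normSqVec g := by
    intro α β
    have e : ∀ x, Complex.normSq ((α : ℂ) * f x + β * (ω * g x)) =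
        α ^ 2 * Complex.normSq (f x) + β ^ 2 * Complex.normSq (g x) +
          2 * α * β * (ω * (star (f x) * g x)).re := by
      intro x
      simp [Complex.normSq_apply]
      linear_combination (β ^ 2 * ((g x).re ^ 2 + (g x).im ^ 2)) * hω'
    unfold normSqVec
    simp only [e, Finset.sum_add_distrib, ← Finset.mul_sum]
    rw [← Complex.re_sum, ← Finset.mul_sum, hre]
    ring
  refine ⟨fun x => (c : ℂ) * f x + s * (ω * g x), fun x => ((-s : ℝ) : ℂ) * f x + c * (ω * g x),
    ?_, key c s, ?_⟩
  · ext x y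
    simp only [Matrix.add_apply, vecMulVec_apply, Pi.star_apply, star_add, star_mul',
      Complex.star_def, Complex.conj_ofReal] at hω ⊢
    push_cast
    linear_combination (f x * (starRingEnd ℂ) (f y) +
      ω * (starRingEnd ℂ) ω * g x * (starRingEnd ℂ) (g y)) * hC +
      (g x * (starRingEnd ℂ) (g y)) * hω
  · rw [key]; ring

lemma Realiz.transfer {d m : ℕ} {S : Matrix (Fin d) (Fin d) ℂ} {y : Fin m → ℝ} (hy : Realiz S y)
    {i j : Fin m} (hij : i ≠ j) {δ : ℝ} (h0 : 0 ≤ δ) (h1 : δ ≤ y i - y j) :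
    Realiz S (Function.update (Function.update y i (y i - δ)) j (y j + δ)) := by
  obtain ⟨F, hF, hn⟩ := hy
  obtain ⟨t, ht0, ht1, ht⟩ : ∃ t : ℝ, 0 ≤ t ∧ t ≤ 1 ∧ t * (y i - y j) = δ := by
    rcases (h0.trans h1).eq_or_lt with h | h
    · exact ⟨0, le_rfl, zero_le_one, by linarith⟩
    · exact ⟨δ / (y i - y j), by positivity, (div_le_one h).2 h1, by field_simp⟩
  have hs : Real.sqrt t ^ 2 = t := Real.sq_sqrt ht0
  have hc : Real.sqrt (1 - t) ^ 2 = 1 - t := Real.sq_sqrt (by linarith)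
  obtain ⟨f', g', h1, h2, h3⟩ := mix (F i) (F j) (Real.sqrt t) (Real.sqrt (1 - t))
    (by rw [hs, hc]; ring)
  rw [hs, hc, hn, hn] at h2 h3
  refine ⟨Function.update (Function.update F i f') j g', ?_, fun l => ?_⟩
  · rw [← hF, frameOp, frameOp, sum_split _ hij,
      sum_split (fun l => vecMulVec (F l) (star (F l))) hij]
    congr 1
    · simpa [hij] using h1
    · apply Finset.sum_congr rfl
      intro l hl
      simp only [mem_erase, mem_univ, and_true] at hl
      simp [hl.1, hl.2]
  · by_cases hlj : l = j
    · subst hlj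
      simp only [Function.update_self, h3]
      linarith
    · by_cases hli : l = i
      · subst hli
        simp only [Function.update_self, Function.update_of_ne hlj, h2]
        linarith
      · simp [hlj, hli, hn]

lemma hlp {m : ℕ} (P : (Fin m → ℝ) → Prop)
    (hP : ∀ (y : Fin m → ℝ) (i j : Fin m) (δ : ℝ), P y → i ≠ j → 0 ≤ δ → δ ≤ y i - y j →
      P (Function.update (Function.update y i (y i - δ)) j (y j + δ)))
    (x : Fin m → ℝ) (hx : Antitone x) :
    ∀ (n : ℕ) (y : Fin m → ℝ), (univ.filter (fun i => x i ≠ y i)).card ≤ n →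
      (∀ j : Fin m, ∑ i ∈ Iic j, x i ≤ ∑ i ∈ Iic j, y i) → ∑ i, x i = ∑ i, y i → P y → P x := by
  intro n
  induction n with
  | zero =>
    intro y hc _ _ hy
    have : x = y := by
      ext i
      by_contra hne
      have : i ∈ univ.filter (fun i => x i ≠ y i) := by simpa using hne
      rw [Finset.card_eq_zero.mp (Nat.le_zero.mp hc)] at this
      simp at this
    rwa [this]
  | succ n ih =>
    intro y hc hpart htot hy
    by_cases hex : ∃ k, y k < x k
    · obtain ⟨k, hk, hmin⟩ : ∃ k, y k < x k ∧ ∀ i < k, x i ≤ y i := by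
        have hne : (univ.filter (fun k => y k < x k)).Nonempty := by
          obtain ⟨k, hk⟩ := hex
          exact ⟨k, by simpa using hk⟩
        refine ⟨_, (mem_filter.mp (Finset.min'_mem _ hne)).2, fun i hi => ?_⟩
        by_contra hlt
        push Not at hlt
        exact absurd (Finset.min'_le _ i (mem_filter.mpr ⟨mem_univ i, hlt⟩)) (not_le.mpr hi)
      obtain ⟨j, hjk, hj⟩ : ∃ j < k, x j < y j := by
        by_contra hno
        push Not at hno
        have : ∑ i ∈ Iic k, y i < ∑ i ∈ Iic k, x i := by
          apply Finset.sum_lt_sum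
          · intro i hi
            rcases (mem_Iic.mp hi).eq_or_lt with h | h
            · rw [h]; exact hk.le
            · exact hno i h
          · exact ⟨k, by simp, hk⟩
        linarith [hpart k]
      have hxjk := hx hjk.le
      set δ := min (y j - x j) (x k - y k) with hδ
      have hδ1 : δ ≤ y j - x j := min_le_left _ _
      have hδ2 : δ ≤ x k - y k := min_le_right _ _
      have hδ0 : 0 ≤ δ := le_min (by linarith) (by linarith)
      set y' := Function.update (Function.update y j (y j - δ)) k (y k + δ) with hy'
      have valk : y' k = y k + δ := by simp [hy']
      have valj : y' j = y j - δ := by simp [hy', hjk.ne]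
      have valo : ∀ i, i ≠ j → i ≠ k → y' i = y i := by
        intro i h1 h2; simp [hy', h1, h2]
      have hsum : ∀ s : Finset (Fin m), ∑ i ∈ s, y' i =
          ∑ i ∈ s, y i - (if j ∈ s then δ else 0) + (if k ∈ s then δ else 0) := by
        intro s
        have e : ∀ i, y' i = y i - (if j = i then δ else 0) + (if k = i then δ else 0) := by
          intro i
          by_cases h1 : i = k
          · subst h1; simp [valk, hjk.ne]
          · by_cases h2 : i = j
            · subst h2; simp [valj, hjk.ne']
            · simp [valo i h2 h1, Ne.symm h1, Ne.symm h2]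
        simp only [e, Finset.sum_add_distrib, Finset.sum_sub_distrib, Finset.sum_ite_eq]
      apply ih y' ?_ ?_ ?_ (hP y j k δ hy hjk.ne hδ0 (by linarith))
      · obtain ⟨q, hq1, hq2⟩ : ∃ q, x q ≠ y q ∧ x q = y' q := by
          rcases min_choice (y j - x j) (x k - y k) with h | h
          · exact ⟨j, hj.ne, by rw [valj, hδ, h]; ring⟩
          · exact ⟨k, hk.ne', by rw [valk, hδ, h]; ring⟩
        have hss : univ.filter (fun i => x i ≠ y' i) ⊂ univ.filter (fun i => x i ≠ y i) := by
          rw [Finset.ssubset_iff_of_subset]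
          · exact ⟨q, by simpa using hq1, by simpa using hq2⟩
          · intro i hi
            simp only [mem_filter, mem_univ, true_and] at hi ⊢
            by_cases h1 : i = k
            · subst h1; exact hk.ne'
            · by_cases h2 : i = j
              · subst h2; exact hj.ne
              · rwa [valo i h2 h1] at hi
        have := Finset.card_lt_card hss
        omega
      · intro l
        rw [hsum]
        by_cases hkl : k ≤ l
        · have hjl : j ≤ l := hjk.le.trans hkl
          simp only [mem_Iic, hkl, hjl, if_true]
          linarith [hpart l]
        · by_cases hjl : j ≤ l
          · simp only [mem_Iic, hkl, hjl, if_true, if_false]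
            have : y j - x j ≤ ∑ i ∈ Iic l, (y i - x i) := by
              apply Finset.single_le_sum (f := fun i => y i - x i) _ (mem_Iic.mpr hjl)
              intro i hi
              have := hmin i (lt_of_le_of_lt (mem_Iic.mp hi) (not_le.mp hkl))
              simpa using this
            rw [Finset.sum_sub_distrib] at this
            linarith
          · simp only [mem_Iic, hkl, hjl, if_false]
            linarith [hpart l]
      · rw [hsum]
        simp [htot]
    · push Not at hex
      have : x = y := by
        ext i
        exact (Finset.sum_eq_sum_iff_of_le (fun i _ => hex i)).mp htot i (mem_univ i)
      rwa [this]

lemma top_sum_antitone {m : ℕ} (y w : Fin m → ℝ) (hy : Antitone y) (hy0 : ∀ i, 0 ≤ y i)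
    (hw0 : ∀ i, 0 ≤ w i) (hw1 : ∀ i, w i ≤ 1) (j : Fin m) (hw : ∑ i, w i ≤ (j : ℝ) + 1) :
    ∑ i, w i * y i ≤ ∑ i ∈ Iic j, y i := by
  have h1 : ∑ i ∈ Iic j, y i = ∑ i, (if i ≤ j then 1 else 0) * y i := by
    simp only [ite_mul, one_mul, zero_mul, ← Finset.sum_filter]
    congr 1
    ext i; simp
  have h2 : ∑ i : Fin m, (if i ≤ j then (1 : ℝ) else 0) = (j : ℝ) + 1 := by
    rw [← Finset.sum_filter, Finset.sum_const]
    have : univ.filter (fun i => i ≤ j) = Iic j := by ext i; simp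
    rw [this]; simp
  have h3 : ∀ i, w i * y i - (if i ≤ j then 1 else 0) * y i ≤
      (w i - (if i ≤ j then 1 else 0)) * y j := by
    intro i
    split_ifs with h
    · nlinarith [hy h, hw1 i]
    · nlinarith [hy (not_le.mp h).le, hw0 i]
  have h4 := Finset.sum_le_sum (fun i (_ : i ∈ univ) => h3 i)
  rw [← Finset.sum_mul, Finset.sum_sub_distrib, Finset.sum_sub_distrib, h2] at h4
  rw [h1]
  nlinarith [hy0 j]

lemma top_sum {m : ℕ} (y w : Fin m → ℝ) (hy0 : ∀ i, 0 ≤ y i)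
    (hw0 : ∀ i, 0 ≤ w i) (hw1 : ∀ i, w i ≤ 1) (j : Fin m) (hw : ∑ i, w i ≤ (j : ℝ) + 1) :
    ∑ i, w i * y i ≤ ∑ i ∈ Iic j, sortDesc y i := by
  have ha := sortDesc_antitone y
  obtain ⟨σ, hσ⟩ := sortDesc_perm y
  rw [hσ] at ha ⊢
  rw [← Equiv.sum_comp σ] at hw ⊢
  exact top_sum_antitone (y ∘ σ) (w ∘ σ) ha (fun i => hy0 _) (fun i => hw0 _) (fun i => hw1 _) j hw

lemma top_sum_pad {d m : ℕ} (h : d ≤ m) (y w : Fin d → ℝ) (hy0 : ∀ i, 0 ≤ y i)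
    (hw0 : ∀ i, 0 ≤ w i) (hw1 : ∀ i, w i ≤ 1) (j : Fin m) (hw : ∑ i, w i ≤ (j : ℝ) + 1) :
    ∑ i, w i * y i ≤ ∑ i ∈ Iic j, sortDesc (pad (sortDesc y) m) i := by
  obtain ⟨σ, hσ⟩ := sortDesc_perm y
  rw [hσ]
  have := top_sum (pad (y ∘ σ) m) (pad (w ∘ σ) m) ?_ ?_ ?_ j ?_
  · rw [sum_castLE h _ (fun i hi => by rw [pad_zero _ i hi, zero_mul])] at this
    simp only [pad_castLE, Function.comp_apply] at this
    rwa [Equiv.sum_comp σ (fun i => w i * y i)] at this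
  · intro i; unfold pad; split_ifs <;> simp [hy0]
  · intro i; unfold pad; split_ifs <;> simp [hw0]
  · intro i; unfold pad; split_ifs <;> simp [hw1]
  · rw [sum_pad h]
    simpa using (Equiv.sum_comp σ w).trans_le hw

lemma frameOp_eq {d m : ℕ} (G : Fin m → Fin d → ℂ) :
    frameOp G = (Matrix.of G)ᵀ * (Matrix.of G)ᵀᴴ := by
  ext x y
  simp [frameOp, Matrix.sum_apply, Matrix.mul_apply, vecMulVec_apply]

lemma normSqVec_eq {d m : ℕ} (C : Matrix (Fin d) (Fin m) ℂ) (i : Fin m) :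
    ((normSqVec (fun x => C x i) : ℝ) : ℂ) = (Cᴴ * C) i i := by
  simp [normSqVec, Matrix.mul_apply, Complex.normSq_eq_conj_mul_self]

/-- Diagonalised picture. -/
lemma exists_C {d m : ℕ} {B : Matrix (Fin d) (Fin d) ℂ} (hB : B.IsHermitian)
    {x : Fin m → ℝ} (hx : Realiz B x) :
    ∃ C : Matrix (Fin d) (Fin m) ℂ,
      C * Cᴴ = diagonal (fun l => ((hB.eigenvalues l : ℝ) : ℂ)) ∧
      ∀ i, x i = ∑ l, Complex.normSq (C l i) := by
  obtain ⟨G, hG, hn⟩ := hx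
  set U : Matrix (Fin d) (Fin d) ℂ := hB.eigenvectorUnitary.1 with hU
  have hU1 : star U * U = 1 := Unitary.coe_star_mul_self _
  have hU2 : U * star U = 1 := Unitary.coe_mul_star_self _
  have hsp := hB.conjStarAlgAut_star_eigenvectorUnitary
  rw [Unitary.conjStarAlgAut_star_apply, ← hU] at hsp
  rw [star_eq_conjTranspose] at hU1 hU2 hsp
  refine ⟨Uᴴ * (Matrix.of G)ᵀ, ?_, fun i => ?_⟩
  · rw [conjTranspose_mul, conjTranspose_conjTranspose]
    calc Uᴴ * (Matrix.of G)ᵀ * ((Matrix.of G)ᵀᴴ * U) =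
        Uᴴ * ((Matrix.of G)ᵀ * (Matrix.of G)ᵀᴴ) * U := by simp only [Matrix.mul_assoc]
      _ = _ := by rw [← frameOp_eq, hG, hsp]; rfl
  · have h1 := normSqVec_eq (Uᴴ * (Matrix.of G)ᵀ) i
    have h2 := normSqVec_eq ((Matrix.of G)ᵀ) i
    have h3 : (Uᴴ * (Matrix.of G)ᵀ)ᴴ * (Uᴴ * (Matrix.of G)ᵀ) =
        (Matrix.of G)ᵀᴴ * (Matrix.of G)ᵀ := by
      rw [conjTranspose_mul, conjTranspose_conjTranspose]
      calc (Matrix.of G)ᵀᴴ * U * (Uᴴ * (Matrix.of G)ᵀ) =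
          (Matrix.of G)ᵀᴴ * (U * Uᴴ) * (Matrix.of G)ᵀ := by simp only [Matrix.mul_assoc]
        _ = _ := by rw [hU2, Matrix.mul_one]
    rw [h3, ← h2] at h1
    have h4 := Complex.ofReal_injective h1
    rw [← hn i]
    exact h4.symm

lemma forward {d m : ℕ} (C : Matrix (Fin d) (Fin m) ℂ) (μ : Fin d → ℝ)
    (hC : C * Cᴴ = diagonal (fun l => ((μ l : ℝ) : ℂ))) :
    (∀ l, ∑ i, Complex.normSq (C l i) = μ l) ∧
      ∀ i, ∑ l, Complex.normSq (C l i) * (μ l)⁻¹ ≤ 1 := by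
  constructor
  · intro l
    have := congrFun (congrFun hC l) l
    simp only [Matrix.mul_apply, conjTranspose_apply, diagonal_apply_eq, Complex.star_def,
      Complex.mul_conj] at this
    exact_mod_cast this
  · intro i
    set D : Matrix (Fin d) (Fin d) ℂ := diagonal (fun l => (((μ l)⁻¹ : ℝ) : ℂ)) with hD
    set P := Cᴴ * D * C with hPdef
    have hDh : Dᴴ = D := by
      rw [hD, diagonal_conjTranspose]
      congr 1
      ext l; simp
    have hPh : Pᴴ = P := by
      rw [hPdef]; simp [conjTranspose_mul, hDh, Matrix.mul_assoc]
    have hPP : P * Pᴴ = P := by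
      rw [hPh]
      calc P * P = Cᴴ * (D * (C * Cᴴ) * D) * C := by rw [hPdef]; simp only [Matrix.mul_assoc]
        _ = P := by
          rw [hC, hPdef]
          congr 2
          rw [hD, diagonal_mul_diagonal, diagonal_mul_diagonal]
          congr 1
          ext l
          by_cases h : μ l = 0
          · simp [h]
          · have : (μ l : ℂ) ≠ 0 := by exact_mod_cast h
            push_cast
            field_simp
    have hPii : P i i = ((∑ l, Complex.normSq (C l i) * (μ l)⁻¹ : ℝ) : ℂ) := by
      rw [hPdef, Matrix.mul_apply]
      push_cast
      apply Finset.sum_congr rfl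
      intro l _
      rw [hD, mul_diagonal, Complex.normSq_eq_conj_mul_self]
      simp only [conjTranspose_apply, Complex.star_def]
      push_cast
      ring
    set p := ∑ l, Complex.normSq (C l i) * (μ l)⁻¹ with hp
    have h1 : ∑ j, Complex.normSq (P i j) = p := by
      have := congrFun (congrFun hPP i) i
      rw [hPii, Matrix.mul_apply] at this
      simp only [conjTranspose_apply, Complex.star_def, Complex.mul_conj] at this
      exact_mod_cast this
    have h2 : Complex.normSq (P i i) ≤ p := by
      rw [← h1]
      exact Finset.single_le_sum (f := fun j => Complex.normSq (P i j))
        (fun j _ => Complex.normSq_nonneg _) (mem_univ i)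
    rw [hPii, Complex.normSq_ofReal] at h2
    nlinarith

lemma forward_sum {d m : ℕ} (C : Matrix (Fin d) (Fin m) ℂ) (μ : Fin d → ℝ) (hμ : ∀ l, 0 ≤ μ l)
    (hC : C * Cᴴ = diagonal (fun l => ((μ l : ℝ) : ℂ))) (hdm : d ≤ m) (j : Fin m) :
    ∑ i ∈ Iic j, ∑ l, Complex.normSq (C l i) ≤
      ∑ i ∈ Iic j, sortDesc (pad (sortDesc μ) m) i := by
  obtain ⟨h1, h2⟩ := forward C μ hC
  have hle : ∀ l, ∑ i ∈ Iic j, Complex.normSq (C l i) ≤ μ l := by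
    intro l
    rw [← h1 l]
    exact Finset.sum_le_sum_of_subset_of_nonneg (subset_univ _)
      (fun i _ _ => Complex.normSq_nonneg _)
  have hnn : ∀ l, 0 ≤ ∑ i ∈ Iic j, Complex.normSq (C l i) :=
    fun l => Finset.sum_nonneg (fun i _ => Complex.normSq_nonneg _)
  have := top_sum_pad hdm μ (fun l => (∑ i ∈ Iic j, Complex.normSq (C l i)) * (μ l)⁻¹) hμ
    (fun l => mul_nonneg (hnn l) (inv_nonneg.mpr (hμ l)))
    (fun l => mul_inv_le_one_of_le₀ (hle l) (hμ l)) j ?_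
  · refine le_trans (le_of_eq ?_) this
    rw [Finset.sum_comm]
    apply Finset.sum_congr rfl
    intro l _
    by_cases h : μ l = 0
    · have := hle l
      rw [h] at this
      rw [le_antisymm this (hnn l)]
      simp
    · field_simp
  · simp only [Finset.sum_mul]
    rw [Finset.sum_comm]
    calc _ ≤ ∑ i ∈ Iic j, (1 : ℝ) := Finset.sum_le_sum (fun i _ => h2 i)
      _ = _ := by simp

lemma realiz_eigenvalues {d : ℕ} {B : Matrix (Fin d) (Fin d) ℂ} (hB : B.PosSemidef) :
    Realiz B hB.isHermitian.eigenvalues := by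
  set μ := hB.isHermitian.eigenvalues with hμ
  have hμ0 : ∀ i, 0 ≤ μ i := hB.eigenvalues_nonneg
  set U : Matrix (Fin d) (Fin d) ℂ := hB.isHermitian.eigenvectorUnitary.1 with hU
  have hU1 : star U * U = 1 := Unitary.coe_star_mul_self _
  have hsp := hB.isHermitian.spectral_theorem
  rw [Unitary.conjStarAlgAut_apply, ← hU, ← hμ] at hsp
  rw [star_eq_conjTranspose] at hU1 hsp
  set R : Matrix (Fin d) (Fin d) ℂ := diagonal (fun l => ((Real.sqrt (μ l) : ℝ) : ℂ)) with hR
  have hRh : Rᴴ = R := by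
    rw [hR, diagonal_conjTranspose]
    congr 1
    ext l; simp
  have hRR : R * R = diagonal (fun l => ((μ l : ℝ) : ℂ)) := by
    rw [hR, diagonal_mul_diagonal]
    congr 1
    ext l
    rw [← Complex.ofReal_mul, Real.mul_self_sqrt (hμ0 l)]
  refine ⟨fun i x => (U * R) x i, ?_, fun i => ?_⟩
  · rw [frameOp_eq]
    change (U * R) * (U * R)ᴴ = B
    rw [conjTranspose_mul, hRh]
    calc U * R * (R * Uᴴ) = U * (R * R) * Uᴴ := by simp only [Matrix.mul_assoc]
      _ = B := by rw [hRR]; exact hsp.symm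
  · have := normSqVec_eq (U * R) i
    have e : (U * R)ᴴ * (U * R) = R * R := by
      rw [conjTranspose_mul, hRh]
      calc R * Uᴴ * (U * R) = R * (Uᴴ * U) * R := by simp only [Matrix.mul_assoc]
        _ = _ := by rw [hU1, Matrix.mul_one]
    rw [e, hRR, diagonal_apply_eq] at this
    exact Complex.ofReal_injective this

theorem stmt_0 {d k : ℕ} (B : Matrix (Fin d) (Fin d) ℂ) (hB : B.PosSemidef)
    (a : Fin k → ℝ) (ha : ∀ i, 0 < a i) :
    (∃ G : Fin k → Fin d → ℂ, frameOp G = B ∧ ∀ i, normSqVec (G i) = a i) ↔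
      MajorizedByPad a (eigsDesc B) := by
  change Realiz B a ↔ _
  have he : eigsDesc B = sortDesc hB.isHermitian.eigenvalues := by
    simp [eigsDesc, hB.isHermitian]
  have hk : k ≤ max k d := le_max_left _ _
  have hd : d ≤ max k d := le_max_right _ _
  rw [MajorizedByPad, he, ← realiz_pad_iff hk, ← realiz_sortDesc_iff]
  generalize max k d = m at hk hd ⊢
  have sumSort : ∀ {n : ℕ} (x : Fin n → ℝ), ∑ i, sortDesc x i = ∑ i, x i := by
    intro n x
    obtain ⟨σ, hσ⟩ := sortDesc_perm x
    rw [hσ]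
    exact Equiv.sum_comp σ x
  constructor
  · intro h
    obtain ⟨C, hC, hx⟩ := exists_C hB.isHermitian h
    refine ⟨fun j => ?_, ?_⟩
    · rw [Finset.sum_congr rfl (fun i _ => hx i)]
      exact forward_sum C _ hB.eigenvalues_nonneg hC hd j
    · rw [← sumSort (pad a m), sum_pad hd, sumSort hB.isHermitian.eigenvalues]
      rw [Finset.sum_congr rfl (fun i _ => hx i), Finset.sum_comm]
      exact Finset.sum_congr rfl (fun l _ => (forward C _ hC).1 l)
  · rintro ⟨h1, h2⟩
    refine hlp (fun y => Realiz B y) (fun y i j δ hy hij h0 h1 => hy.transfer hij h0 h1) _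
      (sortDesc_antitone _) _ (sortDesc (pad (sortDesc hB.isHermitian.eigenvalues) m)) le_rfl
      h1 (by rw [sumSort, sumSort, h2]) ?_
    rw [realiz_sortDesc_iff, realiz_pad_iff hd, realiz_sortDesc_iff]
    exact realiz_eigenvalues hB
end

section
/- Let (F_0, a) be initial data for the completion problem in ℂ^d, let λ = λ↑(S_0), and fix a non-increasing vector μ ∈ Γ_d(a). Let C_a(F_0, μ) = {F = (F_0, G) ∈ C_a(F_0) : λ(S_G) = μ}. Then: (1) the set Λ(C_a(F_0,μ)) = {λ(S_F) : F ∈ C_a(F_0,μ)} is a convex subset of ℝ^d; (2) setting ν = λ + μ (entrywise sum of the increasing vector λ and the decreasing vector μ), the decreasing rearrangement ν↓ belongs to Λ(C_a(F_0,μ)) and ν↓ ≺ λ(S_F) for every F ∈ C_a(F_0,μ); (3) if F = (F_0, G) ∈ C_a(F_0,μ) satisfies λ(S_F) = ν↓, then the matrices S_0 and S_G commute. -/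
open Finset
open scoped ComplexOrder

set_option linter.all false

section
namespace HC
open Matrix

lemma sortDesc_antitone {m : ℕ} (x : Fin m → ℝ) : Antitone (sortDesc x) := by
  intro i j hij
  exact Tuple.monotone_sort x (Fin.rev_le_rev.mpr hij)

lemma sortDesc_eq_comp {m : ℕ} (x : Fin m → ℝ) :
    sortDesc x = x ∘ (Fin.revPerm.trans (Tuple.sort x)) := by
  ext i; simp [sortDesc]

lemma sortAsc_eq {m : ℕ} (x : Fin m → ℝ) (i : Fin m) : sortAsc x i = sortDesc x i.rev := by
  simp [sortDesc, sortAsc]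

/-- two antitone rearrangements agree -/
lemma antitone_eq_of_map_eq {m : ℕ} {x y : Fin m → ℝ} (hx : Antitone x) (hy : Antitone y)
    (h : Multiset.map x univ.val = Multiset.map y univ.val) : x = y := by
  have h1 : List.ofFn x = List.ofFn y := by
    have hp : (List.ofFn x).Perm (List.ofFn y) := by
      rw [← Multiset.coe_eq_coe]
      simpa [Fin.univ_val_map] using h
    exact hp.eq_of_pairwise (fun a b _ _ hab hba => le_antisymm hba hab) (le := fun a b => b ≤ a)
      (by simpa [List.pairwise_ofFn] using fun i j hij => hx hij.le)
      (by simpa [List.pairwise_ofFn] using fun i j hij => hy hij.le)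
  exact List.ofFn_injective h1

lemma map_comp_perm {m : ℕ} (x : Fin m → ℝ) (σ : Equiv.Perm (Fin m)) :
    Multiset.map (x ∘ σ) univ.val = Multiset.map x univ.val := by
  rw [← Multiset.map_map]
  congr 1
  simp

lemma map_sortDesc {m : ℕ} (x : Fin m → ℝ) :
    Multiset.map (sortDesc x) univ.val = Multiset.map x univ.val := by
  rw [sortDesc_eq_comp, map_comp_perm]

lemma sortDesc_congr {m : ℕ} {x y : Fin m → ℝ}
    (h : Multiset.map x univ.val = Multiset.map y univ.val) : sortDesc x = sortDesc y :=
  antitone_eq_of_map_eq (sortDesc_antitone _) (sortDesc_antitone _) (by simp only [map_sortDesc, h])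

lemma sortDesc_of_antitone {m : ℕ} {x : Fin m → ℝ} (hx : Antitone x) : sortDesc x = x :=
  antitone_eq_of_map_eq (sortDesc_antitone _) hx (map_sortDesc x)

lemma sum_sortDesc {m : ℕ} (x : Fin m → ℝ) : ∑ i, sortDesc x i = ∑ i, x i := by
  rw [sortDesc_eq_comp]
  exact Equiv.sum_comp _ _

/-- diagonal matrix with real entries -/
noncomputable def dg {n : Type*} [DecidableEq n] (x : n → ℝ) : Matrix n n ℂ :=
  diagonal (fun i => (x i : ℂ))

lemma dg_herm {n : Type*} [DecidableEq n] (x : n → ℝ) : (dg x)ᴴ = dg x := by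
  ext i j
  by_cases h : i = j
  · subst h; simp [dg]
  · simp [dg, h, Ne.symm h]

/-- unitarity predicate -/
def IsU {n : Type*} [DecidableEq n] [Fintype n] (U : Matrix n n ℂ) : Prop := Uᴴ * U = 1 ∧ U * Uᴴ = 1

section
variable {n : Type*} [DecidableEq n] [Fintype n]

lemma IsU.ct {U : Matrix n n ℂ} (h : IsU U) : IsU Uᴴ := ⟨by simpa using h.2, by simpa using h.1⟩

lemma IsU.mul {U V : Matrix n n ℂ} (h : IsU U) (h' : IsU V) : IsU (U * V) := by
  constructor
  · rw [conjTranspose_mul, Matrix.mul_assoc, ← Matrix.mul_assoc Uᴴ, h.1, Matrix.one_mul, h'.1]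
  · rw [conjTranspose_mul, Matrix.mul_assoc, ← Matrix.mul_assoc V, h'.2, Matrix.one_mul, h.2]

lemma IsU.one : IsU (1 : Matrix n n ℂ) := by simp [IsU]

lemma IsU.of_left {U : Matrix n n ℂ} (h : Uᴴ * U = 1) : IsU U := ⟨h, _root_.mul_eq_one_comm.mp h⟩

lemma IsU.mem {U : Matrix n n ℂ} (h : IsU U) : U ∈ unitaryGroup n ℂ := by
  rw [mem_unitaryGroup_iff]; exact h.2

lemma IsU.of_mem {U : Matrix n n ℂ} (h : U ∈ unitaryGroup n ℂ) : IsU U :=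
  ⟨mem_unitaryGroup_iff'.mp h, mem_unitaryGroup_iff.mp h⟩

lemma conj_herm {x : n → ℝ} (U : Matrix n n ℂ) : (U * dg x * Uᴴ).IsHermitian := by
  unfold IsHermitian
  simp [conjTranspose_mul, dg_herm, Matrix.mul_assoc]

lemma spectral {S : Matrix n n ℂ} (hS : S.IsHermitian) :
    ∃ U, IsU U ∧ S = U * dg hS.eigenvalues * Uᴴ := by
  refine ⟨hS.eigenvectorUnitary, IsU.of_mem hS.eigenvectorUnitary.2, ?_⟩
  have := hS.spectral_theorem
  rw [Unitary.conjStarAlgAut_apply] at this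
  exact this
end

lemma perm_conj {m : ℕ} (x : Fin m → ℝ) (σ : Equiv.Perm (Fin m)) :
    ∃ P, IsU P ∧ dg x = P * dg (x ∘ σ) * Pᴴ := by
  refine ⟨(1 : Matrix _ _ ℂ).submatrix id σ, ?_, ?_⟩
  · apply IsU.of_left
    rw [conjTranspose_submatrix, ← submatrix_mul _ _ _ _ _ Function.bijective_id]
    simp
  · have : dg (x ∘ σ) = (dg x).submatrix σ σ := by
      ext i j; simp [dg, diagonal_apply]
    rw [this, conjTranspose_submatrix, ← submatrix_mul _ _ _ _ _ σ.bijective,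
      ← submatrix_mul _ _ _ _ _ σ.bijective]
    simp

lemma spectral_sorted {m : ℕ} {S : Matrix (Fin m) (Fin m) ℂ} (hS : S.IsHermitian) :
    ∃ U, IsU U ∧ S = U * dg (eigsDesc S) * Uᴴ := by
  obtain ⟨U, hU, h⟩ := spectral hS
  obtain ⟨P, hP, h'⟩ := perm_conj hS.eigenvalues (Fin.revPerm.trans (Tuple.sort hS.eigenvalues))
  refine ⟨U * P, hU.mul hP, ?_⟩
  have : eigsDesc S = hS.eigenvalues ∘ (Fin.revPerm.trans (Tuple.sort hS.eigenvalues)) := by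
    rw [eigsDesc, dif_pos hS, sortDesc_eq_comp]
  rw [this, conjTranspose_mul]
  conv_lhs => rw [h, h']
  simp only [Matrix.mul_assoc]

lemma eigsDesc_conj {m : ℕ} {U : Matrix (Fin m) (Fin m) ℂ} (hU : IsU U) (x : Fin m → ℝ) :
    eigsDesc (U * dg x * Uᴴ) = sortDesc x := by
  have hS := conj_herm (x := x) U
  rw [eigsDesc, dif_pos hS]
  apply sortDesc_congr
  have h1 := hS.roots_charpoly_eq_eigenvalues
  have h2 : (U * dg x * Uᴴ).charpoly = (dg x).charpoly := by
    rw [charpoly_mul_comm, ← Matrix.mul_assoc, hU.1, Matrix.one_mul]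
  have h4 : (dg x).charpoly.roots = Multiset.map (fun i => (x i : ℂ)) univ.val := by
    unfold dg
    rw [charpoly_diagonal, Polynomial.roots_prod]
    · simp
    · simp [Finset.prod_ne_zero_iff, Polynomial.X_sub_C_ne_zero]
  rw [h2, h4] at h1
  have h3 : Multiset.map Complex.re (Multiset.map (fun i => (x i : ℂ)) univ.val) =
     Multiset.map Complex.re (Multiset.map ((RCLike.ofReal : ℝ → ℂ) ∘ hS.eigenvalues) univ.val) := by
    rw [h1]
  simpa [Multiset.map_map, Function.comp_def] using h3.symm

lemma eigsDesc_antitone {m : ℕ} (S : Matrix (Fin m) (Fin m) ℂ) : Antitone (eigsDesc S) := by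
  unfold eigsDesc; split
  · exact sortDesc_antitone _
  · exact fun _ _ _ => le_rfl

lemma eigsAsc_eq {m : ℕ} (S : Matrix (Fin m) (Fin m) ℂ) (i : Fin m) :
    eigsAsc S i = eigsDesc S i.rev := by
  unfold eigsDesc eigsAsc; split
  · exact sortAsc_eq _ _
  · rfl

lemma frameOp_herm {d n : ℕ} (F : Fin n → Fin d → ℂ) : (frameOp F).PosSemidef := by
  unfold frameOp
  exact posSemidef_sum _ (fun i _ => posSemidef_vecMulVec_self_star _)

end HC
end

section
namespace HC
open Matrix

/-- plane rotation -/
noncomputable def rot {n : Type*} [DecidableEq n] (i j : n) (c s : ℝ) : Matrix n n ℂ :=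
  fun a => if a = i then Pi.single i (c : ℂ) + Pi.single j (s : ℂ)
    else if a = j then Pi.single i (-s : ℂ) + Pi.single j (c : ℂ)
    else Pi.single a 1

section
variable {n : Type*} [DecidableEq n] {i j : n} {c s : ℝ}
lemma rot_i : rot i j c s i = Pi.single i (c : ℂ) + Pi.single j (s : ℂ) := if_pos rfl
lemma rot_j (hij : i ≠ j) : rot i j c s j = Pi.single i (-s : ℂ) + Pi.single j (c : ℂ) := by
  unfold rot; rw [if_neg hij.symm, if_pos rfl]
lemma rot_o {a : n} (h : a ≠ i) (h' : a ≠ j) : rot i j c s a = Pi.single a 1 := by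
  unfold rot; rw [if_neg h, if_neg h']
end

lemma rot_isU {n : Type*} [DecidableEq n] [Fintype n] {i j : n} (hij : i ≠ j) {c s : ℝ}
    (hcs : c * c + s * s = 1) :
    IsU (rot i j c s) := by
  have hcs' : (c : ℂ) * c + s * s = 1 := by exact_mod_cast hcs
  have key : rot i j c s * (rot i j c s)ᴴ = 1 := by
    ext a b
    have h1 : (rot i j c s * (rot i j c s)ᴴ) a b = (rot i j c s a) ⬝ᵥ star (rot i j c s b) := rfl
    rw [h1]
    rcases eq_or_ne a i with rfl | hai
    · rcases eq_or_ne b a with rfl | hbi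
      · rw [rot_i]; simp [hij, hij.symm, add_dotProduct, hcs']
      · rcases eq_or_ne b j with rfl | hbj
        · rw [rot_i, rot_j hij]; simp [hij, hij.symm, add_dotProduct]; ring
        · rw [rot_i, rot_o hbi hbj]
          simp [hij, hij.symm, hbi, hbi.symm, hbj, hbj.symm, add_dotProduct]
    · rcases eq_or_ne a j with rfl | haj
      · rcases eq_or_ne b i with rfl | hbi
        · rw [rot_i, rot_j hij]; simp [hij, hij.symm, add_dotProduct]; ring
        · rcases eq_or_ne b a with rfl | hbj
          · rw [rot_j hij]; simp [hij, hij.symm, add_dotProduct]; linear_combination hcs'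
          · rw [rot_j hij, rot_o hbi hbj]
            simp [hij, hij.symm, hbi, hbi.symm, hbj, hbj.symm, add_dotProduct]
      · rw [rot_o hai haj, single_dotProduct]
        rcases eq_or_ne b i with rfl | hbi
        · rw [rot_i]; simp [hai, haj]
        · rcases eq_or_ne b j with rfl | hbj
          · rw [rot_j hij]; simp [hai, haj]
          · rw [rot_o hbi hbj]; simp [Pi.single_apply, Matrix.one_apply]
  exact ⟨_root_.mul_eq_one_comm.mp key, key⟩

/-- diagonals reachable from `S` by unitary conjugation -/
def Reach {m : ℕ} (S : Matrix (Fin m) (Fin m) ℂ) : Set (Fin m → ℝ) :=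
  {x | ∃ W : Matrix (Fin m) (Fin m) ℂ, IsU W ∧ ∀ i, (W * S * Wᴴ) i i = x i}

lemma conj_diag {n : Type*} [Fintype n] (W S : Matrix n n ℂ) (a : n) :
    (W * S * Wᴴ) a a = (W a) ⬝ᵥ (S *ᵥ star (W a)) := by
  rw [Matrix.mul_assoc]; rfl

lemma reach_T {m : ℕ} {S : Matrix (Fin m) (Fin m) ℂ} (hS : S.IsHermitian) {x : Fin m → ℝ}
    (hx : x ∈ Reach S) {i j : Fin m} (hij : i ≠ j) {t : ℝ} (h1 : x j ≤ t) (h2 : t ≤ x i) :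
    Function.update (Function.update x i t) j (x i + x j - t) ∈ Reach S := by
  obtain ⟨W, hW, hWx⟩ := hx
  set Y := W * S * Wᴴ with hY
  have hYh : Yᴴ = Y := by
    rw [hY]; simp only [conjTranspose_mul, conjTranspose_conjTranspose, hS.eq, Matrix.mul_assoc]
  have hre : ∃ z : ℝ, Y i j + Y j i = z := by
    refine ⟨2 * (Y i j).re, ?_⟩
    have : Y j i = star (Y i j) := by
      conv_lhs => rw [← hYh]
      rfl
    rw [this]
    have := Complex.add_conj (Y i j)
    simpa using this
  obtain ⟨z, hz⟩ := hre
  let φ : ℝ → ℝ := fun θ => Real.cos θ ^ 2 * x i + Real.cos θ * Real.sin θ * z + Real.sin θ ^ 2 * x j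
  have hφ : Continuous φ := by fun_prop
  have hivt : t ∈ φ '' Set.Icc 0 (Real.pi / 2) := by
    apply intermediate_value_Icc' (by positivity) hφ.continuousOn
    simp [φ, h1, h2]
  obtain ⟨θ, -, hθ⟩ := hivt
  have hcs : Real.cos θ * Real.cos θ + Real.sin θ * Real.sin θ = 1 := by
    have := Real.cos_sq_add_sin_sq θ; linarith
  have hR := rot_isU hij hcs
  generalize hc : Real.cos θ = c at *
  generalize hs : Real.sin θ = s at *
  refine ⟨rot i j c s * W, hR.mul hW, ?_⟩
  have e : rot i j c s * W * S * (rot i j c s * W)ᴴ = rot i j c s * Y * (rot i j c s)ᴴ := by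
    rw [hY]; simp only [conjTranspose_mul, Matrix.mul_assoc]
  have hcs' : (c : ℂ) * c + s * s = 1 := by exact_mod_cast hcs
  have hθ' : (t : ℂ) = c ^ 2 * x i + c * s * z + s ^ 2 * x j := by
    rw [← hθ]; simp only [φ]; rw [hc, hs]; push_cast; rfl
  intro a
  rw [e, conj_diag]
  rcases eq_or_ne a j with rfl | haj
  · rw [rot_j hij, Function.update_self]
    simp [add_dotProduct, star_add, mulVec_add, hWx, hij]
    rw [hθ', ← hz]
    linear_combination (x i + x a : ℂ) * (hcs')
  · rw [Function.update_of_ne haj]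
    rcases eq_or_ne a i with rfl | hai
    · rw [rot_i, Function.update_self]
      simp [add_dotProduct, star_add, mulVec_add, hWx, hij]
      rw [hθ', ← hz]
      ring
    · rw [rot_o hai haj, Function.update_of_ne hai]
      simp [hWx]

lemma reach_of_major {m : ℕ} {S : Matrix (Fin m) (Fin m) ℂ} (hS : S.IsHermitian) {a : Fin m → ℝ}
    (ha : Antitone a) : ∀ (N : ℕ) (b : Fin m → ℝ), b ∈ Reach S →
    (∀ j, ∑ i ∈ Iic j, a i ≤ ∑ i ∈ Iic j, b i) → ∑ i, a i = ∑ i, b i →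
    #{i | a i ≠ b i} ≤ N → a ∈ Reach S := by
  intro N
  induction N with
  | zero =>
    intro b hb _ _ h
    have : a = b := by
      ext i
      have := Finset.card_eq_zero.mp (Nat.le_zero.mp h)
      by_contra hne
      have h2 : i ∈ ({i | a i ≠ b i} : Finset (Fin m)) := by simpa using hne
      rw [this] at h2; simp at h2
    rw [this]; exact hb
  | succ N ih =>
    intro b hb hpre htot hcard
    by_cases hab : a = b
    · rw [hab]; exact hb
    have hne : ∃ j, b j < a j := by
      by_contra! hcon
      apply hab; ext i
      have := (Finset.sum_eq_sum_iff_of_le (fun i _ => hcon i)).mp htot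
      exact this i (mem_univ _)
    obtain ⟨j, hj, hjmin⟩ : ∃ j, b j < a j ∧ ∀ l < j, a l ≤ b l := by
      obtain ⟨j, hj⟩ := hne
      have hw : ({j | b j < a j} : Set (Fin m)).Nonempty := ⟨j, hj⟩
      obtain ⟨j0, h0, h1⟩ := (Set.toFinite {j | b j < a j}).exists_minimal hw
      refine ⟨j0, h0, fun l hl => ?_⟩
      by_contra! hcon
      exact absurd (h1 hcon hl.le) (not_le.mpr hl)
    obtain ⟨i, hi, hij⟩ : ∃ i, a i < b i ∧ i < j := by
      by_contra! hcon
      have h1 := hpre j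
      have h2 : ∀ l ∈ Iic j, b l ≤ a l := by
        intro l hl
        rcases (mem_Iic.mp hl).lt_or_eq with h | h
        · by_contra! hc; exact absurd h (not_lt.mpr (hcon l hc))
        · rw [h]; exact hj.le
      have := Finset.sum_lt_sum h2 ⟨j, by simp, hj⟩
      linarith
    have hijne : i ≠ j := hij.ne
    have haij := ha hij.le
    set δ := min (b i - a i) (a j - b j) with hδ
    have hδ1 : δ ≤ b i - a i := min_le_left _ _
    have hδ2 : δ ≤ a j - b j := min_le_right _ _
    have hδ0 : 0 < δ := lt_min (by linarith) (by linarith)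
    have hb' := reach_T hS hb hijne (t := b i - δ) (by linarith) (by linarith)
    set b' := Function.update (Function.update b i (b i - δ)) j (b i + b j - (b i - δ)) with hb'd
    have hb'i : b' i = b i - δ := by simp [hb'd, hijne]
    have hb'j : b' j = b j + δ := by simp [hb'd]
    have hb'o : ∀ l, l ≠ i → l ≠ j → b' l = b l := by
      intro l h h'; simp [hb'd, h, h']
    have hb's : ∀ l, b' l = b l - (if l = i then δ else 0) + (if l = j then δ else 0) := by
      intro l
      rcases eq_or_ne l i with rfl | h
      · rw [hb'i]; simp [hijne]
      · rcases eq_or_ne l j with rfl | h'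
        · rw [hb'j]; simp [h]
        · rw [hb'o l h h']; simp [h, h']
    have hsum : ∀ s : Finset (Fin m), ∑ l ∈ s, b' l = ∑ l ∈ s, b l - (if i ∈ s then δ else 0) +
        (if j ∈ s then δ else 0) := by
      intro s
      rw [Finset.sum_congr rfl (fun l _ => hb's l), Finset.sum_add_distrib, Finset.sum_sub_distrib]
      simp
    refine ih b' hb' ?_ ?_ ?_
    · intro l
      rw [hsum]
      by_cases hjl : j ≤ l
      · have : i ≤ l := hij.le.trans hjl
        simp [hjl, this, hpre l]
      · by_cases hil : i ≤ l
        · simp only [mem_Iic, hil, hjl, if_true, if_false, add_zero]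
          have : ∑ p ∈ Iic l, a p + (b i - a i) ≤ ∑ p ∈ Iic l, b p := by
            have h1 : (b i - a i) ≤ ∑ p ∈ Iic l, (b p - a p) := by
              apply Finset.single_le_sum (f := fun p => b p - a p)
              · intro p hp
                have := hjmin p (lt_of_le_of_lt (mem_Iic.mp hp) (not_le.mp hjl))
                simpa using this
              · simpa using hil
            rw [Finset.sum_sub_distrib] at h1; linarith
          linarith
        · simp [hil, hjl, hpre l]
    · rw [hsum]; simp [htot]
    · have hlt : #{l | a l ≠ b' l} < #{l | a l ≠ b l} := by
        apply Finset.card_lt_card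
        rw [Finset.ssubset_iff_of_subset]
        · rcases min_choice (b i - a i) (a j - b j) with h | h
          · refine ⟨i, by simpa using hi.ne, ?_⟩
            simp only [mem_filter, mem_univ, true_and, not_not]
            rw [hb'i, hδ, h]; ring
          · refine ⟨j, by simpa using hj.ne', ?_⟩
            simp only [mem_filter, mem_univ, true_and, not_not]
            rw [hb'j, hδ, h]; ring
        · intro l hl
          simp only [mem_filter, mem_univ, true_and] at hl ⊢
          rcases eq_or_ne l i with rfl | h
          · exact hi.ne
          · rcases eq_or_ne l j with rfl | h'
            · exact hj.ne'
            · rwa [hb'o l h h'] at hl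
      omega

end HC
end

section
namespace HC
open Matrix

lemma pad_antitone {k m : ℕ} {x : Fin k → ℝ} (hx : Antitone x) (h0 : ∀ i, 0 ≤ x i) :
    Antitone (pad x m) := by
  intro i j hij
  unfold pad
  by_cases hj : (j : ℕ) < k
  · have hi : (i : ℕ) < k := lt_of_le_of_lt hij hj
    rw [dif_pos hj, dif_pos hi]
    exact hx hij
  · rw [dif_neg hj]
    split
    · exact h0 _
    · exact le_rfl

lemma vecMulVec_sum {d m : ℕ} (Z : Matrix (Fin d) (Fin m) ℂ) :
    Z * Zᴴ = ∑ l, vecMulVec (fun r => Z r l) (star (fun r => Z r l)) := by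
  ext i j
  simp [Matrix.mul_apply, Matrix.sum_apply, vecMulVec_apply]

lemma exists_frame {d k : ℕ} {a : Fin k → ℝ} (ha_pos : ∀ i, 0 < a i) (ha : Antitone a)
    {μ : Fin d → ℝ} (hμ : μ ∈ Gamma d a) {S : Matrix (Fin d) (Fin d) ℂ} (hS : S.IsHermitian)
    (hSμ : eigsDesc S = μ) :
    ∃ G : Fin k → Fin d → ℂ, (∀ i, normSqVec (G i) = a i) ∧ frameOp G = S := by
  obtain ⟨hμa, hμ0, hmaj, htot⟩ := hμ
  set m := max k d with hm
  have hkm : k ≤ m := le_max_left _ _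
  have hdm : d ≤ m := le_max_right _ _
  have hpa : Antitone (pad a m) := pad_antitone ha (fun i => (ha_pos i).le)
  have hpb : Antitone (pad μ m) := pad_antitone hμa hμ0
  rw [sortDesc_of_antitone hpa, sortDesc_of_antitone hpb] at hmaj
  have hb : pad μ m ∈ Reach (dg (pad μ m)) := by
    refine ⟨1, IsU.one, ?_⟩
    intro i; simp [dg]
  obtain ⟨W, hW, hWd⟩ := reach_of_major (S := dg (pad μ m)) (dg_herm _) hpa _ _ hb hmaj htot le_rfl
  obtain ⟨U, hU, hUS⟩ := spectral_sorted hS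
  rw [hSμ] at hUS
  obtain ⟨E, hEa⟩ : ∃ E : Matrix (Fin d) (Fin m) ℂ, ∀ i l, E i l = if (i : ℕ) = l then ((Real.sqrt (μ i) : ℝ) : ℂ) else 0 :=
    ⟨fun i l => if (i : ℕ) = l then ((Real.sqrt (μ i) : ℝ) : ℂ) else 0, fun _ _ => rfl⟩
  have hsq : ∀ i, ((Real.sqrt (μ i) : ℝ) : ℂ) * ((Real.sqrt (μ i) : ℝ) : ℂ) = (μ i : ℂ) := by
    intro i; exact_mod_cast Real.mul_self_sqrt (hμ0 i)
  have hE1 : E * Eᴴ = dg μ := by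
    ext i j
    simp only [Matrix.mul_apply, conjTranspose_apply, hEa]
    rw [Finset.sum_eq_single (Fin.castLE hdm i)]
    · by_cases hij : i = j
      · subst hij; simp [dg, hsq]
      · have : ¬ ((j : ℕ) = i) := fun h => hij (Fin.ext h.symm)
        simp [dg, hij, this]
    · intro l _ hl
      have : ¬ ((i : ℕ) = l) := fun h => hl (Fin.ext (by simp [h]))
      simp [this]
    · simp
  have hE2 : Eᴴ * E = dg (pad μ m) := by
    ext l l'
    simp only [Matrix.mul_apply, conjTranspose_apply, hEa]
    by_cases hl : (l : ℕ) < d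
    · rw [Finset.sum_eq_single (⟨l, hl⟩ : Fin d)]
      · by_cases hll : l = l'
        · subst hll; simp [dg, pad, hl, hsq]
        · have : ¬ ((l : ℕ) = l') := fun h => hll (Fin.ext h)
          simp [dg, hll, this]
      · intro i _ hi
        have : ¬ ((i : ℕ) = l) := fun h => hi (Fin.ext (by simp [h]))
        simp [this]
      · simp
    · rw [Finset.sum_eq_zero]
      · by_cases hll : l = l'
        · subst hll; simp [dg, pad, hl]
        · simp [dg, hll]
      · intro i _
        have : ¬ ((i : ℕ) = l) := fun h => hl (h ▸ i.2)
        simp [this]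
  let Z : Matrix (Fin d) (Fin m) ℂ := U * E * Wᴴ
  have hZ1 : Z * Zᴴ = S := by
    simp only [Z, conjTranspose_mul, conjTranspose_conjTranspose]
    calc U * E * Wᴴ * (W * (Eᴴ * Uᴴ)) = U * E * (Wᴴ * W) * (Eᴴ * Uᴴ) := by simp only [Matrix.mul_assoc]
      _ = U * (E * Eᴴ) * Uᴴ := by rw [hW.1]; simp only [Matrix.mul_assoc, Matrix.mul_one, Matrix.one_mul]
      _ = S := by rw [hE1, ← hUS]
  have hZ2 : Zᴴ * Z = W * dg (pad μ m) * Wᴴ := by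
    simp only [Z, conjTranspose_mul, conjTranspose_conjTranspose]
    calc W * (Eᴴ * Uᴴ) * (U * E * Wᴴ) = W * (Eᴴ * (Uᴴ * U) * E) * Wᴴ := by simp only [Matrix.mul_assoc]
      _ = _ := by rw [hU.1, Matrix.mul_one, hE2]
  have hnorm : ∀ l, normSqVec (fun r => Z r l) = pad a m l := by
    intro l
    have h1 := hWd l
    rw [← hZ2] at h1
    have h2 : (Zᴴ * Z) l l = ((normSqVec (fun r => Z r l) : ℝ) : ℂ) := by
      simp only [Matrix.mul_apply, conjTranspose_apply, normSqVec]
      push_cast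
      apply Finset.sum_congr rfl
      intro r _
      rw [Complex.normSq_eq_conj_mul_self]; rfl
    rw [h2] at h1
    exact_mod_cast h1
  refine ⟨fun i r => Z r (Fin.castLE hkm i), ?_, ?_⟩
  · intro i
    rw [hnorm]
    simp [pad]
  · rw [← hZ1, vecMulVec_sum, frameOp]
    apply Fintype.sum_of_injective (Fin.castLE hkm) (Fin.castLE_injective hkm)
    · intro l hl
      have hlk : ¬ ((l : ℕ) < k) := by
        intro h; exact hl ⟨⟨l, h⟩, rfl⟩
      have h0 := hnorm l
      rw [pad, dif_neg hlk, normSqVec, Finset.sum_eq_zero_iff_of_nonneg (fun _ _ => Complex.normSq_nonneg _)] at h0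
      have : (fun r => Z r l) = 0 := by
        ext r
        have := h0 r (mem_univ _)
        simpa using this
      rw [this]; simp
    · intro i; rfl

end HC
end

section
namespace HC
open Matrix

variable {d : ℕ}

lemma trace_dg {n : ℕ} (x : Fin n → ℝ) : (dg x).trace = ((∑ i, x i : ℝ) : ℂ) := by
  simp [dg, Matrix.trace]

lemma trace_conjU {U : Matrix (Fin d) (Fin d) ℂ} (hU : IsU U) (M : Matrix (Fin d) (Fin d) ℂ) :
    (U * M * Uᴴ).trace = M.trace := by
  rw [Matrix.trace_mul_comm, ← Matrix.mul_assoc, hU.1, Matrix.one_mul]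

lemma trace_eigsDesc {S : Matrix (Fin d) (Fin d) ℂ} (hS : S.IsHermitian) :
    S.trace = ((∑ i, eigsDesc S i : ℝ) : ℂ) := by
  obtain ⟨U, hU, h⟩ := spectral_sorted hS
  conv_lhs => rw [h]
  rw [trace_conjU hU, trace_dg]

/-- quadratic form -/
lemma quad_conj (U : Matrix (Fin d) (Fin d) ℂ) (x : Fin d → ℝ) (v : Fin d → ℂ) :
    star v ⬝ᵥ ((U * dg x * Uᴴ) *ᵥ v) = ((∑ c, x c * Complex.normSq ((Uᴴ *ᵥ v) c) : ℝ) : ℂ) := by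
  have : star v ⬝ᵥ ((U * dg x * Uᴴ) *ᵥ v) = star (Uᴴ *ᵥ v) ⬝ᵥ (dg x *ᵥ (Uᴴ *ᵥ v)) := by
    rw [star_mulVec, conjTranspose_conjTranspose, ← Matrix.dotProduct_mulVec]
    simp only [Matrix.mulVec_mulVec, Matrix.mul_assoc]
  rw [this, dotProduct]
  push_cast
  apply Finset.sum_congr rfl
  intro c _
  rw [dg, Matrix.mulVec_diagonal, Complex.normSq_eq_conj_mul_self, Pi.star_apply]
  simp only [Complex.star_def]; ring

lemma sum_normSq_conj {U : Matrix (Fin d) (Fin d) ℂ} (hU : IsU U) (v : Fin d → ℂ) :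
    (∑ c, Complex.normSq ((Uᴴ *ᵥ v) c)) = ∑ c, Complex.normSq (v c) := by
  have h1 := quad_conj U (fun _ => 1) v
  have h2 := quad_conj (1 : Matrix (Fin d) (Fin d) ℂ) (fun _ => 1) v
  have e : dg (fun _ : Fin d => (1:ℝ)) = 1 := by simp [dg]
  rw [e, Matrix.mul_one, hU.2] at h1
  rw [e] at h2
  simp only [Matrix.mul_one, conjTranspose_one, one_mulVec, one_mul] at h1 h2
  rw [h1] at h2
  exact_mod_cast h2

lemma weyl_mono {X Y : Matrix (Fin d) (Fin d) ℂ} (hX : X.IsHermitian) (hY : Y.IsHermitian)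
    (h : (Y - X).PosSemidef) (i : Fin d) : eigsDesc X i ≤ eigsDesc Y i := by
  by_contra hlt
  push Not at hlt
  obtain ⟨U, hU, hUX⟩ := spectral_sorted hX
  obtain ⟨V, hV, hVY⟩ := spectral_sorted hY
  obtain ⟨M, hM⟩ : ∃ M : Matrix (Fin d) (Fin d) ℂ, ∀ c e, M c e =
      if c < i then Vᴴ c e else if i < c then Uᴴ c e else 0 := ⟨fun c e => _, fun _ _ => rfl⟩
  have hdet : M.det = 0 := by
    apply Matrix.det_eq_zero_of_row_eq_zero i
    intro e; simp [hM]
  obtain ⟨v, hv0, hv⟩ := Matrix.exists_mulVec_eq_zero_iff.mpr hdet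
  have hVv : ∀ c, c < i → (Vᴴ *ᵥ v) c = 0 := by
    intro c hc
    have := congrFun hv c
    simp only [mulVec, dotProduct, hM, hc, if_true] at this ⊢
    exact this
  have hUv : ∀ c, i < c → (Uᴴ *ᵥ v) c = 0 := by
    intro c hc
    have := congrFun hv c
    simp only [mulVec, dotProduct, hM, hc, not_lt_of_gt hc, if_true, if_false] at this ⊢
    exact this
  have hpos : 0 < ∑ c, Complex.normSq (v c) := by
    rcases Function.ne_iff.mp hv0 with ⟨c, hc⟩
    apply Finset.sum_pos' (fun _ _ => Complex.normSq_nonneg _)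
    exact ⟨c, mem_univ _, Complex.normSq_pos.mpr hc⟩
  have h1 := quad_conj U (eigsDesc X) v
  have h2 := quad_conj V (eigsDesc Y) v
  rw [← hUX] at h1
  rw [← hVY] at h2
  have h3 := h.dotProduct_mulVec_nonneg v
  rw [Matrix.sub_mulVec, dotProduct_sub, h1, h2, ← Complex.ofReal_sub] at h3
  have h4 := Complex.zero_le_real.mp h3
  have h5 : eigsDesc X i * ∑ c, Complex.normSq (v c) ≤ ∑ c, eigsDesc X c * Complex.normSq ((Uᴴ *ᵥ v) c) := by
    rw [← sum_normSq_conj hU, Finset.mul_sum]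
    apply Finset.sum_le_sum
    intro c _
    rcases lt_or_ge i c with hc | hc
    · simp [hUv c hc]
    · exact mul_le_mul_of_nonneg_right (eigsDesc_antitone X hc) (Complex.normSq_nonneg _)
  have h6 : ∑ c, eigsDesc Y c * Complex.normSq ((Vᴴ *ᵥ v) c) ≤ eigsDesc Y i * ∑ c, Complex.normSq (v c) := by
    rw [← sum_normSq_conj hV, Finset.mul_sum]
    apply Finset.sum_le_sum
    intro c _
    rcases lt_or_ge c i with hc | hc
    · simp [hVv c hc]
    · exact mul_le_mul_of_nonneg_right (eigsDesc_antitone Y hc) (Complex.normSq_nonneg _)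
  nlinarith

lemma dg_posSemidef {x : Fin d → ℝ} (h : ∀ i, 0 ≤ x i) : (dg x).PosSemidef := by
  apply PosSemidef.diagonal
  intro i
  simpa using h i

lemma dg_isHerm {x : Fin d → ℝ} : (dg x).IsHermitian := dg_herm x

lemma conjU_psd {U : Matrix (Fin d) (Fin d) ℂ} {x : Fin d → ℝ} (h : ∀ i, 0 ≤ x i) :
    (U * dg x * Uᴴ).PosSemidef := (dg_posSemidef h).mul_mul_conjTranspose_same U

lemma dg_add (x y : Fin d → ℝ) : dg x + dg y = dg (fun i => x i + y i) := by
  simp [dg, Matrix.diagonal_add]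

lemma dg_sub (x y : Fin d → ℝ) : dg x - dg y = dg (fun i => x i - y i) := by
  simp [dg, Matrix.diagonal_sub]

/-- Lidskii inequality in index-set form. -/
lemma lidskii {A B : Matrix (Fin d) (Fin d) ℂ} (hA : A.IsHermitian) (hB : B.IsHermitian)
    (I : Finset (Fin d)) (j : Fin d) (hI : I.card = j + 1) :
    ∑ i ∈ I, (eigsDesc A i.rev + eigsDesc B i) ≤ ∑ i ∈ Finset.Iic j, eigsDesc (A + B) i := by
  have hC := hA.add hB
  obtain ⟨W, hW, hWC⟩ := spectral_sorted hC
  obtain ⟨U, hU, hUA⟩ := spectral_sorted hA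
  set g := eigsDesc (A + B) with hg
  set t := g j with ht
  have ganti : Antitone g := eigsDesc_antitone _
  have hone : ∀ V : Matrix (Fin d) (Fin d) ℂ, IsU V → V * dg (fun _ => t) * Vᴴ = dg (fun _ => t) := by
    intro V hV
    have : dg (fun _ : Fin d => t) = (t : ℂ) • 1 := by
      rw [dg, ← Matrix.diagonal_one, ← Matrix.diagonal_smul]; congr 1; ext; simp
    rw [this]; simp [hV.2]
  set P := W * dg (fun i => max (g i - t) 0) * Wᴴ with hP
  have hPp : P.PosSemidef := conjU_psd (fun i => le_max_right _ _)
  set Y := P + dg (fun _ => t) - A with hY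
  have hYh : Y.IsHermitian := (hPp.1.add dg_isHerm).sub hA
  have h1 : (Y - B).PosSemidef := by
    have : Y - B = W * dg (fun i => max (g i - t) 0 + t - g i) * Wᴴ := by
      rw [← dg_sub, ← dg_add, Matrix.mul_sub, Matrix.sub_mul, Matrix.mul_add, Matrix.add_mul, ← hWC, hone W hW,
        hY, hP]
      abel
    rw [this]
    apply conjU_psd
    intro i
    have := le_max_left (g i - t) 0
    linarith
  have hTA : dg (fun _ => t) - A = U * dg (fun i => t - eigsDesc A i) * Uᴴ := by
    rw [← dg_sub, Matrix.mul_sub, Matrix.sub_mul, hone U hU, ← hUA]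
  have hTAh : (dg (fun _ => t) - A).IsHermitian := dg_isHerm.sub hA
  have h2 : (Y - (dg (fun _ => t) - A)).PosSemidef := by
    have : Y - (dg (fun _ => t) - A) = P := by rw [hY]; abel
    rwa [this]
  have hTe : ∀ i, eigsDesc (dg (fun _ => t) - A) i = t - eigsDesc A i.rev := by
    rw [hTA, eigsDesc_conj hU]
    have : Antitone (fun i : Fin d => t - eigsDesc A i.rev) := by
      intro a b hab
      have := eigsDesc_antitone A (Fin.rev_le_rev.mpr hab)
      simp only; linarith
    intro i
    refine Eq.trans ?_ (congrFun (sortDesc_of_antitone this) i)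
    refine congrFun ?_ i
    apply sortDesc_congr
    exact (map_comp_perm (fun i => t - eigsDesc A i) Fin.revPerm).symm
  have htr : ∑ i, (eigsDesc Y i - (t - eigsDesc A i.rev)) = ∑ i, max (g i - t) 0 := by
    have e1 := trace_eigsDesc hYh
    have e2 := trace_eigsDesc hTAh
    have e3 : P.trace = ((∑ i, max (g i - t) 0 : ℝ) : ℂ) := by
      rw [hP, trace_conjU hW, trace_dg]
    have e4 : Y.trace = P.trace + (dg (fun _ => t) - A).trace := by
      rw [← Matrix.trace_add, hY]; congr 1; abel
    rw [e1, e2, e3] at e4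
    simp only [hTe] at e4
    have e5 : ∑ i, eigsDesc Y i = ∑ i, max (g i - t) 0 + ∑ i : Fin d, (t - eigsDesc A i.rev) := by exact_mod_cast e4
    rw [Finset.sum_sub_distrib, e5]; ring
  have hsum : ∑ i, max (g i - t) 0 = ∑ i ∈ Finset.Iic j, (g i - t) := by
    rw [← Finset.sum_subset (Finset.subset_univ (Finset.Iic j))]
    · apply Finset.sum_congr rfl
      intro i hi
      exact max_eq_left (sub_nonneg.mpr (ganti (Finset.mem_Iic.mp hi)))
    · intro i _ hi
      apply max_eq_right
      have : j ≤ i := (not_le.mp (fun h => hi (Finset.mem_Iic.mpr h))).le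
      exact sub_nonpos.mpr (ganti this)
  have hle : ∑ i ∈ I, (eigsDesc Y i - (t - eigsDesc A i.rev)) ≤ ∑ i, (eigsDesc Y i - (t - eigsDesc A i.rev)) := by
    apply Finset.sum_le_sum_of_subset_of_nonneg (Finset.subset_univ _)
    intro i _ _
    have := weyl_mono hTAh hYh h2 i
    rw [hTe] at this; linarith
  have hle2 : ∑ i ∈ I, (eigsDesc B i - (t - eigsDesc A i.rev)) ≤ ∑ i ∈ I, (eigsDesc Y i - (t - eigsDesc A i.rev)) := by
    apply Finset.sum_le_sum
    intro i _
    have := weyl_mono hB hYh h1 i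
    linarith
  have := hle2.trans (hle.trans (htr.trans hsum).le)
  rw [Finset.sum_sub_distrib, Finset.sum_sub_distrib, Finset.sum_sub_distrib, Finset.sum_const, Finset.sum_const, hI, Fin.card_Iic] at this
  rw [Finset.sum_add_distrib]
  linarith

end HC
end

section
namespace HC
open Matrix

/-- Abel summation -/
lemma abel_nonneg : ∀ {n : ℕ} (x u : Fin n → ℝ), Antitone x →
    (∀ j : Fin n, 0 ≤ ∑ i ∈ Finset.Iic j, u i) → (∑ i, u i = 0) → 0 ≤ ∑ i, x i * u i := by
  have key : ∀ (n : ℕ) (x u : ℕ → ℝ), (∀ i, i + 1 < n → x (i+1) ≤ x i) →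
      (∀ j, j ≤ n → 0 ≤ ∑ i ∈ range j, u i) → (∑ i ∈ range n, u i = 0) → 0 ≤ ∑ i ∈ range n, x i * u i := by
    intro n x u hx hu h0
    have := Finset.sum_range_by_parts x u n
    simp only [smul_eq_mul] at this
    rw [this, h0]
    have : ∑ i ∈ range (n-1), (x (i+1) - x i) * ∑ j ∈ range (i+1), u j ≤ 0 := by
      apply Finset.sum_nonpos
      intro i hi
      have hi' := Finset.mem_range.mp hi
      exact mul_nonpos_of_nonpos_of_nonneg (by linarith [hx i (by omega)]) (hu (i+1) (by omega))
    linarith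
  intro n x u hx hu h0
  let x' : ℕ → ℝ := fun i => if h : i < n then x ⟨i, h⟩ else 0
  let u' : ℕ → ℝ := fun i => if h : i < n then u ⟨i, h⟩ else 0
  have hx' : ∀ i : Fin n, x' i = x i := fun i => by simp [x']
  have hu' : ∀ i : Fin n, u' i = u i := fun i => by simp [u']
  have h0' : ∑ i ∈ range n, u' i = 0 := by
    rw [Finset.sum_range]; simp only [hu', h0]
  have := key n x' u' ?_ ?_ h0'
  · rw [Finset.sum_range] at this
    simpa only [hx', hu'] using this
  · intro i hi
    rw [show x' (i+1) = x ⟨i+1, hi⟩ from dif_pos hi, show x' i = x ⟨i, by omega⟩ from dif_pos (by omega)]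
    exact hx (by simp [Fin.le_def])
  · intro j hj
    rcases Nat.eq_zero_or_pos j with rfl | hj0
    · simp
    · have hjn : j - 1 < n := by omega
      have e := hu ⟨j - 1, hjn⟩
      have : ∑ i ∈ range j, u' i = ∑ i ∈ Finset.Iic (⟨j-1, hjn⟩ : Fin n), u i := by
        symm
        apply Finset.sum_bij (fun (i : Fin n) _ => (i : ℕ))
        · intro i hi
          have := Fin.le_def.mp (Finset.mem_Iic.mp hi)
          simp at this ⊢; omega
        · intro i _ i' _ h; exact Fin.ext h
        · intro i hi
          have := Finset.mem_range.mp hi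
          refine ⟨⟨i, by omega⟩, ?_, rfl⟩
          simp [Fin.le_def]; omega
        · intro i _; rw [hu']
      rw [this]; exact e

variable {d : ℕ}

lemma eigs_sum_major {A B : Matrix (Fin d) (Fin d) ℂ} (hA : A.IsHermitian) (hB : B.IsHermitian) :
    MajorizedBy (sortDesc (fun i => eigsAsc A i + eigsDesc B i)) (eigsDesc (A + B)) := by
  constructor
  · intro j
    rw [sortDesc_of_antitone (sortDesc_antitone _), sortDesc_of_antitone (eigsDesc_antitone _)]
    set x : Fin d → ℝ := fun i => eigsAsc A i + eigsDesc B i with hx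
    have hxe : x = fun i => eigsDesc A i.rev + eigsDesc B i := by
      ext i; rw [hx]; simp only [eigsAsc_eq]
    rw [sortDesc_eq_comp]
    have h := lidskii hA hB ((Finset.Iic j).map (Fin.revPerm.trans (Tuple.sort x)).toEmbedding) j (by simp)
    rw [Finset.sum_map] at h
    refine le_trans (le_of_eq ?_) h
    apply Finset.sum_congr rfl
    intro i _
    exact congrFun hxe ((Fin.revPerm.trans (Tuple.sort x)) i)
  · rw [sum_sortDesc]
    have e1 := trace_eigsDesc (hA.add hB)
    rw [Matrix.trace_add, trace_eigsDesc hA, trace_eigsDesc hB] at e1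
    have e2 : ∑ i, eigsDesc A i + ∑ i, eigsDesc B i = ∑ i, eigsDesc (A + B) i := by exact_mod_cast e1
    rw [← e2, Finset.sum_add_distrib]
    congr 1
    rw [← Equiv.sum_comp Fin.revPerm]
    apply Finset.sum_congr rfl
    intro i _
    rw [eigsAsc_eq]; simp

lemma major_sq {x y : Fin d → ℝ} (hx : Antitone x) (hy : Antitone y) (h : MajorizedBy x y) :
    ∑ i, x i ^ 2 ≤ ∑ i, y i ^ 2 := by
  obtain ⟨h1, h2⟩ := h
  rw [sortDesc_of_antitone hx, sortDesc_of_antitone hy] at h1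
  have := abel_nonneg x (fun i => y i - x i) hx (fun j => by
    rw [Finset.sum_sub_distrib]; linarith [h1 j]) (by rw [Finset.sum_sub_distrib]; linarith)
  have e : ∑ i, y i ^ 2 = ∑ i, x i ^ 2 + 2 * ∑ i, x i * (y i - x i) + ∑ i, (y i - x i)^2 := by
    rw [Finset.mul_sum, ← Finset.sum_add_distrib, ← Finset.sum_add_distrib]
    apply Finset.sum_congr rfl; intro i _; ring
  have : 0 ≤ ∑ i, (y i - x i)^2 := Finset.sum_nonneg (fun i _ => sq_nonneg _)
  linarith

lemma trace_sq {S : Matrix (Fin d) (Fin d) ℂ} (hS : S.IsHermitian) :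
    (S * S).trace = ((∑ i, eigsDesc S i ^ 2 : ℝ) : ℂ) := by
  obtain ⟨U, hU, h⟩ := spectral_sorted hS
  have : S * S = U * dg (fun i => eigsDesc S i ^ 2) * Uᴴ := by
    have e : dg (fun i => eigsDesc S i ^ 2) = dg (eigsDesc S) * dg (eigsDesc S) := by
      simp [dg, sq]
    rw [e]
    conv_lhs => rw [h]
    calc _ = U * (dg (eigsDesc S) * (Uᴴ * U) * dg (eigsDesc S)) * Uᴴ := by simp only [Matrix.mul_assoc]
      _ = _ := by rw [hU.1, Matrix.mul_one]
  rw [this, trace_conjU hU, trace_dg]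

lemma deriv_aux {E : Type*} [NormedRing E] [NormedAlgebra ℝ E] [CompleteSpace E] (L : E →L[ℝ] ℝ) (A B K : E) :
    HasDerivAt (fun t : ℝ => L (A * (NormedSpace.exp (t • K) * B * NormedSpace.exp (t • (-K)))))
      (L (A * (K * B - B * K))) 0 := by
  have h1 : HasDerivAt (fun t : ℝ => NormedSpace.exp (t • K)) K 0 := by
    have := hasDerivAt_exp_smul_const (𝕂 := ℝ) K (0:ℝ)
    simpa using this
  have h2 : HasDerivAt (fun t : ℝ => NormedSpace.exp (t • (-K))) (-K) 0 := by
    have := hasDerivAt_exp_smul_const (𝕂 := ℝ) (-K) (0:ℝ)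
    simpa using this
  have := ((h1.mul_const B).mul h2).const_mul A
  have h3 := L.hasFDerivAt.comp_hasDerivAt 0 this
  refine HasDerivAt.congr_deriv h3 ?_
  congr 2
  simp [sub_eq_add_neg]

section expo
attribute [local instance] Matrix.linftyOpNormedAddCommGroup Matrix.linftyOpNormedSpace
  Matrix.linftyOpNormedRing Matrix.linftyOpNormedAlgebra

lemma commute_of_min {A B : Matrix (Fin d) (Fin d) ℂ} (hA : A.IsHermitian) (hB : B.IsHermitian)
    (h : ∀ W, IsU W → (A * B).trace.re ≤ (A * (W * B * Wᴴ)).trace.re) : A * B = B * A := by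
  set K := A * B - B * A with hK
  have hKs : Kᴴ = -K := by
    rw [hK]; simp [conjTranspose_sub, conjTranspose_mul, hA.eq, hB.eq]
  let L : Matrix (Fin d) (Fin d) ℂ →ₗ[ℝ] ℝ :=
    Complex.reLm ∘ₗ ((Matrix.traceLinearMap (Fin d) ℂ ℂ).restrictScalars ℝ)
  let L' := LinearMap.toContinuousLinearMap L
  let g : ℝ → Matrix (Fin d) (Fin d) ℂ := fun t => A * (NormedSpace.exp (t • K) * B * NormedSpace.exp (t • (-K)))
  have hU : ∀ t : ℝ, IsU (NormedSpace.exp (t • K)) ∧ (NormedSpace.exp (t • K))ᴴ = NormedSpace.exp (t • (-K)) := by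
    intro t
    have e : (NormedSpace.exp (t • K))ᴴ = NormedSpace.exp (t • (-K)) := by
      rw [← Matrix.exp_conjTranspose, conjTranspose_smul, hKs]; simp
    refine ⟨IsU.of_left ?_, e⟩
    rw [e, ← Matrix.exp_add_of_commute]
    · simp
    · exact ((Commute.refl K).neg_left.smul_left t).smul_right t
  have hd2 : HasDerivAt (fun t => L' (g t)) (L' (A * (K * B - B * K))) 0 :=
    deriv_aux L' A B K
  have hmin : IsLocalMin (fun t => L' (g t)) 0 := by
    apply Filter.Eventually.of_forall
    intro t
    have := h _ (hU t).1
    rw [(hU t).2] at this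
    have e0 : g 0 = A * B := by simp [g]
    change L' (g 0) ≤ L' (g t)
    rw [e0]
    exact this
  have h0 := hmin.hasDerivAt_eq_zero hd2
  have h0' : (A * (K * B - B * K)).trace.re = 0 := h0
  have e : (A * (K * B - B * K)).trace = (K * Kᴴ).trace := by
    rw [hKs]
    have : (A * (K * B - B * K)).trace = (K * (B * A - A * B)).trace := by
      generalize K = K
      rw [Matrix.mul_sub, Matrix.mul_sub, Matrix.trace_sub, Matrix.trace_sub, Matrix.trace_mul_comm, Matrix.mul_assoc,
        ← Matrix.mul_assoc A, Matrix.trace_mul_comm (A * B)]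
    rw [this]; congr 2; rw [hK]; abel
  rw [e] at h0'
  have hp : (0:ℂ) ≤ (K * Kᴴ).trace := (posSemidef_self_mul_conjTranspose K).trace_nonneg
  have hz : (K * Kᴴ).trace = 0 := by
    apply Complex.ext h0'
    exact (Complex.nonneg_iff.mp hp).2.symm
  have := trace_mul_conjTranspose_self_eq_zero_iff.mp hz
  exact sub_eq_zero.mp this
end expo

lemma commute_of_eq {A B : Matrix (Fin d) (Fin d) ℂ} (hA : A.IsHermitian) (hB : B.IsHermitian)
    (h : eigsDesc (A + B) = sortDesc (fun i => eigsAsc A i + eigsDesc B i)) : A * B = B * A := by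
  apply commute_of_min hA hB
  intro W hW
  obtain ⟨U, hU, hUB⟩ := spectral_sorted hB
  have hB' : (W * B * Wᴴ).IsHermitian := by
    unfold IsHermitian
    simp only [conjTranspose_mul, conjTranspose_conjTranspose, hB.eq, Matrix.mul_assoc]
  have hE : eigsDesc (W * B * Wᴴ) = eigsDesc B := by
    have : W * B * Wᴴ = (W * U) * dg (eigsDesc B) * (W * U)ᴴ := by
      conv_lhs => rw [hUB]
      simp only [conjTranspose_mul, Matrix.mul_assoc]
    rw [this, eigsDesc_conj (hW.mul hU), sortDesc_of_antitone (eigsDesc_antitone _)]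
  have hm := eigs_sum_major hA hB'
  rw [hE, ← h] at hm
  have hs := major_sq (eigsDesc_antitone _) (eigsDesc_antitone _) hm
  have t1 := trace_sq (hA.add hB)
  have t2 := trace_sq (hA.add hB')
  have key : ∀ C : Matrix (Fin d) (Fin d) ℂ, ((A + C) * (A + C)).trace = (A * A).trace + 2 * (A * C).trace + (C * C).trace := by
    intro C
    rw [Matrix.add_mul, Matrix.mul_add, Matrix.mul_add]
    simp only [Matrix.trace_add]
    rw [Matrix.trace_mul_comm C A]; ring
  rw [key] at t1 t2
  have e1 : (W * B * Wᴴ * (W * B * Wᴴ)).trace = (B * B).trace := by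
    rw [trace_sq hB', trace_sq hB, hE]
  rw [e1] at t2
  have r1 := congrArg Complex.re t1
  have r2 := congrArg Complex.re t2
  simp only [Complex.add_re, Complex.mul_re, Complex.ofReal_re, Complex.re_ofNat, Complex.im_ofNat, zero_mul, sub_zero] at r1 r2
  linarith

end HC
end

section
namespace HC
open Matrix
variable {d : ℕ}

lemma nu_exists {A : Matrix (Fin d) (Fin d) ℂ} (hA : A.IsHermitian) {μ : Fin d → ℝ} (hμ : Antitone μ) :
    ∃ B : Matrix (Fin d) (Fin d) ℂ, B.IsHermitian ∧ eigsDesc B = μ ∧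
      eigsDesc (A + B) = sortDesc (fun i => eigsAsc A i + μ i) := by
  obtain ⟨U, hU, hUA⟩ := spectral_sorted hA
  refine ⟨U * dg (μ ∘ Fin.revPerm) * Uᴴ, conj_herm _, ?_, ?_⟩
  · rw [eigsDesc_conj hU, sortDesc_congr (map_comp_perm μ Fin.revPerm), sortDesc_of_antitone hμ]
  · have : A + U * dg (μ ∘ Fin.revPerm) * Uᴴ = U * dg (fun i => eigsDesc A i + μ i.rev) * Uᴴ := by
      conv_lhs => rw [hUA]
      rw [← Matrix.add_mul, ← Matrix.mul_add, dg_add]; rfl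
    rw [this, eigsDesc_conj hU]
    apply sortDesc_congr
    rw [← map_comp_perm (fun i => eigsAsc A i + μ i) Fin.revPerm]
    congr 1
    ext i
    simp [eigsAsc_eq]

end HC
end

section
namespace HC
open Matrix

/-- successive differences -/
noncomputable def gap {d : ℕ} (w : Fin d → ℝ) (i : Fin d) : ℝ :=
  w i - (if h : (i : ℕ) + 1 < d then w ⟨i + 1, h⟩ else 0)

variable {d : ℕ}

lemma gap_nonneg {w : Fin d → ℝ} (hw : Antitone w) (h0 : ∀ i, 0 ≤ w i) (i : Fin d) : 0 ≤ gap w i := by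
  unfold gap
  split
  · exact sub_nonneg.mpr (hw (by simp [Fin.le_def]))
  · simpa using h0 i

lemma gap_Ici (w : Fin d → ℝ) (c : Fin d) : ∑ i ∈ Finset.Ici c, gap w i = w c := by
  let w' : ℕ → ℝ := fun i => if h : i < d then w ⟨i, h⟩ else 0
  have h1 : ∑ i ∈ Finset.Ici c, gap w i = ∑ i ∈ Finset.Ico (c : ℕ) d, (w' i - w' (i+1)) := by
    apply Finset.sum_bij (fun (i : Fin d) _ => (i : ℕ))
    · intro i hi
      simpa using hi
    · intro i _ j _ h; exact Fin.ext h
    · intro i hi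
      have := Finset.mem_Ico.mp hi
      exact ⟨⟨i, this.2⟩, by simpa [Fin.le_def] using this.1, rfl⟩
    · intro i _
      simp [gap, w']
  rw [h1, Finset.sum_Ico_eq_sum_range]
  have := Finset.sum_range_sub' (fun i => w' (c + i)) (d - c)
  simp only [← add_assoc] at this
  rw [this]
  have e : (c : ℕ) + (d - c) = d := by omega
  simp [e, w']

lemma gap_sum {V : Type*} [AddCommGroup V] [Module ℝ V] (w : Fin d → ℝ) (φ : Fin d → V) :
    ∑ i, gap w i • ∑ c ∈ Finset.Iic i, φ c = ∑ c, w c • φ c := by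
  simp only [Finset.smul_sum]
  rw [Finset.sum_comm' (t' := univ) (s' := fun c => Finset.Ici c) (by simp)]
  apply Finset.sum_congr rfl
  intro c _
  rw [← Finset.sum_smul, gap_Ici]

/-- leading columns -/
def ld (H : Matrix (Fin d) (Fin d) ℂ) (i : Fin d) : Matrix (Fin d) {c : Fin d // c ≤ i} ℂ :=
  H.submatrix id Subtype.val

noncomputable def ind (i : Fin d) : Fin d → ℝ := fun c => if c ≤ i then 1 else 0

lemma mul_ld (A H : Matrix (Fin d) (Fin d) ℂ) (i : Fin d) : A * ld H i = ld (A * H) i := by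
  ext a b; simp [ld, Matrix.mul_apply]

lemma sum_sub (i : Fin d) {V : Type*} [AddCommMonoid V] (φ : Fin d → V) :
    ∑ c : {c : Fin d // c ≤ i}, φ c = ∑ c ∈ Finset.Iic i, φ c := by
  rw [← Finset.sum_subtype (Finset.Iic i) (by simp)]

lemma ld_mul_ct (U : Matrix (Fin d) (Fin d) ℂ) (i : Fin d) :
    ld U i * (ld U i)ᴴ = U * dg (ind i) * Uᴴ := by
  ext a b
  rw [Matrix.mul_apply, Matrix.mul_apply]
  simp only [ld, conjTranspose_apply, submatrix_apply, id, dg, mul_diagonal, ind]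
  rw [sum_sub i (fun c => U a c * star (U b c)), ← Finset.sum_subset (Finset.subset_univ (Finset.Iic i))]
  · apply Finset.sum_congr rfl
    intro c hc
    simp [Finset.mem_Iic.mp hc]
  · intro c _ hc
    have : ¬ c ≤ i := fun h => hc (Finset.mem_Iic.mpr h)
    simp [this]

lemma dg_gap (w : Fin d → ℝ) : ∑ i, gap w i • dg (ind i) = dg w := by
  ext a b
  by_cases hab : a = b
  · subst hab
    simp only [Matrix.sum_apply, Matrix.smul_apply, dg, diagonal_apply_eq, ind]
    rw [← gap_Ici w a]
    push_cast
    rw [← Finset.sum_subset (Finset.subset_univ (Finset.Ici a))]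
    · apply Finset.sum_congr rfl
      intro c hc
      simp [Finset.mem_Ici.mp hc]
    · intro c _ hc
      have : ¬ a ≤ c := fun h => hc (Finset.mem_Ici.mpr h)
      simp [this]
  · simp [Matrix.sum_apply, dg, hab]

lemma conj_gap (w : Fin d → ℝ) (U : Matrix (Fin d) (Fin d) ℂ) :
    ∑ i, gap w i • (ld U i * (ld U i)ᴴ) = U * dg w * Uᴴ := by
  simp only [ld_mul_ct]
  rw [← dg_gap w, Matrix.mul_sum, Matrix.sum_mul]
  simp

variable {J : Type*} [Fintype J]

def Solv (w : J → Fin d → ℝ) (κ : ℝ) : Prop :=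
  ∃ U : J → Matrix (Fin d) (Fin d) ℂ, (∀ j, IsU (U j)) ∧
    ∑ j, U j * dg (w j) * (U j)ᴴ = (κ : ℂ) • 1

def Semi (H : J → Matrix (Fin d) (Fin d) ℂ) (w : J → Fin d → ℝ) (κ : ℝ) : Prop :=
  ∀ (m : ℕ) (p : Matrix (Fin m) (Fin d) ℂ), p * pᴴ = 1 →
    κ * m ≤ ∑ j, ∑ i, gap (w j) i * (p * ld (H j) i).rank

lemma trace_le_rank {m : ℕ} {n : Type*} [Fintype n] (Y : Matrix (Fin m) n ℂ)
    (h : (1 - Y * Yᴴ).PosSemidef) : (Y * Yᴴ).trace.re ≤ Y.rank := by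
  classical
  have hH : (Y * Yᴴ).IsHermitian := isHermitian_mul_conjTranspose_self Y
  rw [← rank_self_mul_conjTranspose, hH.rank_eq_card_non_zero_eigs]
  have ht := hH.trace_eq_sum_eigenvalues
  rw [ht]
  have h1 : ∀ i, hH.eigenvalues i ≤ 1 := by
    intro i
    obtain ⟨U, hU, hUS⟩ := spectral hH
    have e : Uᴴ * (1 - Y * Yᴴ) * U = 1 - dg hH.eigenvalues := by
      rw [Matrix.mul_sub, Matrix.sub_mul, Matrix.mul_one, hU.1]
      congr 1
      conv_lhs => rw [hUS]
      calc _ = (Uᴴ * U) * dg hH.eigenvalues * (Uᴴ * U) := by simp only [Matrix.mul_assoc]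
        _ = _ := by rw [hU.1]; simp
    have hp := h.conjTranspose_mul_mul_same U
    rw [e] at hp
    have := hp.diag_nonneg (i := i)
    simp [dg] at this
    exact_mod_cast this
  rw [Fintype.card_subtype, Finset.card_filter]
  simp only [Complex.re_sum]
  push_cast
  apply Finset.sum_le_sum
  intro i _
  by_cases h0 : hH.eigenvalues i = 0
  · simp [h0]
  · simp [h0]; exact h1 i

lemma semi_of_solv {w : J → Fin d → ℝ} {κ : ℝ} (hg : ∀ j i, 0 ≤ gap (w j) i)
    {U : J → Matrix (Fin d) (Fin d) ℂ} (hU : ∀ j, IsU (U j))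
    (hs : ∑ j, U j * dg (w j) * (U j)ᴴ = (κ : ℂ) • 1) : Semi U w κ := by
  intro m p hp
  have e1 : (κ * m : ℂ) = ∑ j, ∑ i, (gap (w j) i : ℂ) * ((p * ld (U j) i) * (p * ld (U j) i)ᴴ).trace := by
    have h1 : (p * ((κ : ℂ) • (1 : Matrix (Fin d) (Fin d) ℂ)) * pᴴ).trace = (κ : ℂ) * (m : ℂ) := by
      simp [hp]
    rw [← h1, ← hs]
    simp only [Matrix.mul_sum, Matrix.sum_mul, Matrix.trace_sum]
    apply Finset.sum_congr rfl
    intro j _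
    rw [← conj_gap]
    simp only [Matrix.mul_sum, Matrix.sum_mul, Matrix.trace_sum]
    apply Finset.sum_congr rfl
    intro i _
    rw [Matrix.mul_smul, Matrix.smul_mul, Matrix.trace_smul, conjTranspose_mul]
    simp only [Matrix.mul_assoc]
    rw [Complex.real_smul]
  have e2 : κ * m = ∑ j, ∑ i, gap (w j) i * ((p * ld (U j) i) * (p * ld (U j) i)ᴴ).trace.re := by
    have := congrArg Complex.re e1
    simp only [Complex.re_sum, Complex.re_ofReal_mul] at this
    rw [← this]; simp
  rw [e2]
  apply Finset.sum_le_sum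
  intro j _
  apply Finset.sum_le_sum
  intro i _
  apply mul_le_mul_of_nonneg_left _ (hg j i)
  apply trace_le_rank
  have : 1 - p * ld (U j) i * (p * ld (U j) i)ᴴ = p * (U j * dg (fun c => 1 - ind i c) * (U j)ᴴ) * pᴴ := by
    have e : dg (fun c => 1 - ind i c) = 1 - dg (ind i) := by
      rw [← dg_sub]; simp [dg]
    rw [e, Matrix.mul_sub, Matrix.sub_mul, Matrix.mul_one, (hU j).2, Matrix.mul_sub, Matrix.sub_mul, Matrix.mul_one, hp,
      ← ld_mul_ct, conjTranspose_mul]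
    simp only [Matrix.mul_assoc]
  rw [this]
  apply PosSemidef.mul_mul_conjTranspose_same
  apply conjU_psd
  intro c
  unfold ind; split <;> norm_num

end HC
end

section
namespace HC
open Matrix

lemma lift_hom {A K L : Type*} [CommRing A] [IsDomain A] [Field K] [Algebra A K] [FaithfulSMul A K] [Algebra.IsAlgebraic A K]
    [Field L] [IsAlgClosed L] (g : A →+* L) (hg : Function.Injective g) :
    ∃ τ : K →+* L, ∀ a, τ (algebraMap A K a) = g a := by
  letI := g.toAlgebra
  haveI : FaithfulSMul A L := (faithfulSMul_iff_algebraMap_injective A L).mpr hg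
  haveI : Module.IsTorsionFree A L := inferInstance
  exact ⟨(IsAlgClosed.lift : K →ₐ[A] L).toRingHom, fun a => (IsAlgClosed.lift : K →ₐ[A] L).commutes a⟩

lemma exists_hom {R s : Type*} [Field R] [Algebra R ℂ] {x : s → ℂ} (hx : IsTranscendenceBasis R x)
    (f : s → Polynomial R) (hf : ∀ i, Transcendental R (f i)) :
    ∃ τ : ℂ →+* ℂ, ∀ i, τ (x i) = Polynomial.aeval (x i) (f i) := by
  have hy := hx.1.polynomial_aeval_of_transcendental hf
  haveI := hx.isAlgebraic
  let g : Algebra.adjoin R (Set.range x) →ₐ[R] ℂ :=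
    (MvPolynomial.aeval (fun i => Polynomial.aeval (x i) (f i))).comp hx.1.aevalEquiv.symm.toAlgHom
  have hg : Function.Injective g := by
    have := algebraicIndependent_iff_injective_aeval.mp hy
    exact this.comp hx.1.aevalEquiv.symm.injective
  obtain ⟨τ, hτ⟩ := lift_hom (K := ℂ) g.toRingHom hg
  refine ⟨τ, fun i => ?_⟩
  have h1 := hτ (hx.1.aevalEquiv (MvPolynomial.X i))
  rw [hx.1.algebraMap_aevalEquiv, MvPolynomial.aeval_X] at h1
  rw [h1]
  simp [g]

lemma rat_dense (z : ℂ) {ε : ℝ} (hε : 0 < ε) : ∃ a b : ℚ, ‖((a : ℂ) + b * Complex.I) - z‖ < ε := by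
  obtain ⟨a, ha⟩ := Rat.denseRange_cast (𝕜 := ℝ) |>.exists_dist_lt z.re (half_pos hε)
  obtain ⟨b, hb⟩ := Rat.denseRange_cast (𝕜 := ℝ) |>.exists_dist_lt z.im (half_pos hε)
  refine ⟨a, b, ?_⟩
  refine lt_of_le_of_lt (Complex.norm_le_abs_re_add_abs_im _) ?_
  rw [Real.dist_eq, abs_sub_comm] at ha hb
  simp at ha hb ⊢
  linarith

lemma generic (N : Type) [Finite N] : ∃ x : N → ℂ, ∀ z : N → ℂ, ∀ ε > 0, ∃ τ : ℂ →+* ℂ, ∀ n, ‖τ (x n) - z n‖ < ε := by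
  classical
  let R := algebraicClosure ℚ ℂ
  obtain ⟨s, hs⟩ := exists_isTranscendenceBasis R ℂ
  have hR : Cardinal.mk R ≤ Cardinal.aleph0 := by
    haveI : Algebra.IsAlgebraic ℚ R := algebraicClosure.isAlgebraic ℚ ℂ
    have := Algebra.IsAlgebraic.cardinalMk_le_max ℚ R
    simpa using this
  have hinf : Infinite s := by
    rw [Cardinal.infinite_iff]
    have := IsAlgClosed.cardinal_eq_cardinal_transcendence_basis_of_aleph0_lt' _ hs hR
      (by rw [Cardinal.mk_complex]; exact Cardinal.aleph0_lt_continuum)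
    rw [← this, Cardinal.mk_complex]; exact Cardinal.aleph0_le_continuum
  obtain ⟨e⟩ : Nonempty (N ↪ s) := by
    haveI := Fintype.ofFinite N
    exact ⟨(Fintype.equivFin N).toEmbedding.trans (Fin.valEmbedding.trans (Infinite.natEmbedding s))⟩
  refine ⟨fun n => e n, ?_⟩
  intro z ε hε
  have hI : IsAlgebraic ℚ Complex.I := ⟨Polynomial.X ^ 2 + 1, by
    intro h
    have := congrArg (Polynomial.eval 0) h
    simp at this, by simp⟩
  let I' : R := ⟨Complex.I, mem_algebraicClosure_iff.mpr hI⟩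
  have hq : ∀ n, ∃ q : R, ‖(q : ℂ) - z n‖ < ε / 2 := by
    intro n
    obtain ⟨a, b, hab⟩ := rat_dense (z n) (half_pos hε)
    refine ⟨(a : R) + b * I', ?_⟩
    simpa [I'] using hab
  choose q hq using hq
  have hr : ∀ n, ∃ k : ℕ, ‖((e n : s) : ℂ)‖ / (k + 1) < ε / 2 := by
    intro n
    obtain ⟨k, hk⟩ := exists_nat_gt (‖((e n : s) : ℂ)‖ / (ε / 2))
    refine ⟨k, ?_⟩
    rw [div_lt_iff₀ (by positivity)] at hk ⊢
    nlinarith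
  choose k hk using hr
  let f : s → Polynomial R := fun b => if h : ∃ n, e n = b then
    Polynomial.C (((k h.choose : R) + 1)⁻¹) * Polynomial.X + Polynomial.C (q h.choose) else Polynomial.X
  have hf : ∀ b, Transcendental R (f b) := by
    intro b
    have key : ∀ a c : R, a ≠ 0 → Transcendental R (Polynomial.C a * Polynomial.X + Polynomial.C c) := by
      intro a c ha
      apply Polynomial.transcendental
      · rw [Polynomial.natDegree_linear ha]; exact one_ne_zero
      · rw [Polynomial.leadingCoeff_linear ha]; exact mem_nonZeroDivisors_of_ne_zero ha
    by_cases h : ∃ n, e n = b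
    · simp only [f, dif_pos h]
      apply key
      apply inv_ne_zero
      exact_mod_cast Nat.succ_ne_zero (k h.choose)
    · simp only [f, dif_neg h]
      have := key 1 0 one_ne_zero
      simpa using this
  obtain ⟨τ, hτ⟩ := exists_hom hs f hf
  refine ⟨τ, fun n => ?_⟩
  have hfn : f (e n) = Polynomial.C (((k n : R) + 1)⁻¹) * Polynomial.X + Polynomial.C (q n) := by
    have h : ∃ n', e n' = e n := ⟨n, rfl⟩
    have h2 : h.choose = n := e.injective h.choose_spec
    simp only [f, dif_pos h, h2]
  rw [hτ, hfn]
  have : (Polynomial.aeval ((e n : s) : ℂ)) (Polynomial.C (((k n : R) + 1)⁻¹) * Polynomial.X + Polynomial.C (q n)) - z n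
     = ((q n : ℂ) - z n) + ((e n : s) : ℂ) / (k n + 1) := by
    simp [Polynomial.aeval_C]
    ring
  rw [this]
  refine lt_of_le_of_lt (norm_add_le _ _) ?_
  have h3 : ‖((e n : s) : ℂ) / (k n + 1)‖ = ‖((e n : s) : ℂ)‖ / (k n + 1) := by
    rw [norm_div]; congr 1
    exact_mod_cast Complex.norm_natCast (k n + 1)
  rw [h3]
  linarith [hq n, hk n]
end HC
end

section
namespace HC
open Matrix

lemma rank_map_le {m n : Type*} [Fintype m] [Fintype n] (M : Matrix m n ℂ) (τ : ℂ →+* ℂ) :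
    (M.map τ).rank ≤ M.rank := by
  classical
  set R := Submodule.span ℂ (Set.range M.col) with hR
  have hr : Module.finrank ℂ R = M.rank := (rank_eq_finrank_span_cols M).symm
  let b := Module.finBasisOfFinrankEq ℂ R hr
  obtain ⟨A, hA⟩ : ∃ A : Matrix m (Fin M.rank) ℂ, ∀ i l, A i l = (b l : m → ℂ) i := ⟨fun i l => (b l : m → ℂ) i, fun _ _ => rfl⟩
  have hc : ∀ j, M.col j ∈ R := fun j => Submodule.subset_span ⟨j, rfl⟩
  obtain ⟨B, hB⟩ : ∃ B : Matrix (Fin M.rank) n ℂ, ∀ l j, B l j = b.repr ⟨M.col j, hc j⟩ l := ⟨fun l j => _, fun _ _ => rfl⟩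
  have hM : M = A * B := by
    ext i j
    have := b.sum_repr ⟨M.col j, hc j⟩
    have h2 := congrArg (fun x : R => (x : m → ℂ) i) this
    simp only [Submodule.coe_sum, Submodule.coe_smul, Finset.sum_apply, Pi.smul_apply, smul_eq_mul] at h2
    have h3 : M i j = ∑ l, b.repr ⟨M.col j, hc j⟩ l * (b l : m → ℂ) i := h2.symm
    rw [Matrix.mul_apply, h3]
    apply Finset.sum_congr rfl
    intro l _
    rw [hA, hB, mul_comm]
  conv_lhs => rw [hM]
  rw [Matrix.map_mul]
  refine (rank_mul_le_left _ _).trans ?_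
  refine (rank_le_card_width _).trans ?_
  simp

open Filter Topology in
lemma rank_lsc {m n : Type*} [Fintype m] [Fintype n] (M : ℕ → Matrix m n ℂ) (M0 : Matrix m n ℂ)
    (h : Tendsto M atTop (𝓝 M0)) : ∀ᶠ k in atTop, M0.rank ≤ (M k).rank := by
  classical
  let L : Matrix m n ℂ →ₗ[ℂ] ((n → ℂ) →L[ℂ] (m → ℂ)) :=
    (LinearMap.toContinuousLinearMap : ((n → ℂ) →ₗ[ℂ] (m → ℂ)) ≃ₗ[ℂ] _).toLinearMap ∘ₗ
      (Matrix.toLin' : Matrix m n ℂ ≃ₗ[ℂ] _).toLinearMap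
  have hL : Continuous L := LinearMap.continuous_of_finiteDimensional L
  have ho := (isOpen_setOfPred_nat_le_rank (𝕜 := ℂ) (E := n → ℂ) (F := m → ℂ) M0.rank).preimage hL
  have key : ∀ N : Matrix m n ℂ, N ∈ L ⁻¹' { f : (n → ℂ) →L[ℂ] (m → ℂ) | (M0.rank : Cardinal) ≤ (f : (n → ℂ) →ₗ[ℂ] (m → ℂ)).rank } ↔ M0.rank ≤ N.rank := by
    intro N
    have : ((L N : (n → ℂ) →L[ℂ] (m → ℂ)) : (n → ℂ) →ₗ[ℂ] (m → ℂ)) = N.mulVecLin := by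
      ext; simp [L]
    rw [Set.mem_preimage, Set.mem_setOf_eq, this, Matrix.rank, LinearMap.rank, ← Module.finrank_eq_rank]
    exact Nat.cast_le
  have := h.eventually (ho.mem_nhds ((key M0).mpr le_rfl))
  filter_upwards [this] with k hk
  exact (key _).mp hk

variable {d : ℕ}

lemma isCompact_coiso (m : ℕ) : IsCompact {p : Matrix (Fin m) (Fin d) ℂ | p * pᴴ = 1} := by
  have hc : IsCompact (Set.univ.pi (fun _ : Fin m => Set.univ.pi (fun _ : Fin d => Metric.closedBall (0:ℂ) 1))) :=
    isCompact_univ_pi (fun _ => isCompact_univ_pi (fun _ => isCompact_closedBall _ _))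
  refine IsCompact.of_isClosed_subset hc ?_ ?_
  · exact isClosed_eq (continuous_id.matrix_mul continuous_id.matrix_conjTranspose) continuous_const
  · intro p hp i _ j _
    rw [mem_closedBall_zero_iff]
    have h1 : (p * pᴴ) i i = 1 := by rw [hp]; simp
    rw [Matrix.mul_apply] at h1
    have h2 : ∑ j, ‖p i j‖ ^ 2 = 1 := by
      have := congrArg Complex.re h1
      simp only [conjTranspose_apply, Complex.re_sum] at this
      rw [← Complex.one_re, ← this]
      apply Finset.sum_congr rfl
      intro j _
      rw [Complex.star_def, Complex.mul_conj, Complex.ofReal_re, Complex.normSq_eq_norm_sq]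
    have h3 := Finset.single_le_sum (f := fun j => ‖p i j‖ ^ 2) (fun _ _ => by positivity) (Finset.mem_univ j)
    rw [h2] at h3
    have : ‖p i j‖ ^ 2 ≤ 1 := h3
    exact (sq_le_one_iff₀ (norm_nonneg _)).mp this

/-- orthonormalise rows -/
lemma exists_ortho {m : ℕ} (P : Matrix (Fin m) (Fin d) ℂ) (Q : Matrix (Fin d) (Fin m) ℂ) (h : P * Q = 1) :
    ∃ t : Matrix (Fin m) (Fin m) ℂ, (t * P) * (t * P)ᴴ = 1 := by
  have hH : (P * Pᴴ).IsHermitian := isHermitian_mul_conjTranspose_self P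
  have hp : (P * Pᴴ).PosSemidef := posSemidef_self_mul_conjTranspose P
  have hr : (P * Pᴴ).rank = m := by
    rw [rank_self_mul_conjTranspose]
    apply le_antisymm
    · simpa using rank_le_card_height P
    · have := rank_mul_le_left P Q
      rw [h] at this; simpa using this
  obtain ⟨U, hU, hS⟩ := spectral hH
  have hne : ∀ i, hH.eigenvalues i ≠ 0 := by
    rw [hH.rank_eq_card_non_zero_eigs] at hr
    intro i hi
    have : Fintype.card {i // hH.eigenvalues i ≠ 0} < Fintype.card (Fin m) :=
      Fintype.card_subtype_lt (x := i) (by simpa using hi)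
    simp at this hr; omega
  have hpos : ∀ i, 0 < hH.eigenvalues i := fun i => lt_of_le_of_ne (hp.eigenvalues_nonneg i) (hne i).symm
  refine ⟨dg (fun i => (Real.sqrt (hH.eigenvalues i))⁻¹) * Uᴴ, ?_⟩
  have e : ∀ X : Matrix (Fin m) (Fin m) ℂ, (X * P) * (X * P)ᴴ = X * (P * Pᴴ) * Xᴴ := by
    intro X; rw [conjTranspose_mul]; simp only [Matrix.mul_assoc]
  have e2 : ∀ X : Matrix (Fin m) (Fin m) ℂ, X * (P * Pᴴ) * Xᴴ = X * (U * dg hH.eigenvalues * Uᴴ) * Xᴴ := fun X => congrArg (fun Z => X * Z * Xᴴ) hS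
  rw [e, e2, conjTranspose_mul, conjTranspose_conjTranspose, dg_herm]
  calc _ = dg (fun i => (Real.sqrt (hH.eigenvalues i))⁻¹) * (Uᴴ * U) * dg hH.eigenvalues * (Uᴴ * U) * dg (fun i => (Real.sqrt (hH.eigenvalues i))⁻¹) := by
        simp only [Matrix.mul_assoc]
    _ = _ := by
        rw [hU.1]
        simp only [Matrix.mul_one, dg, diagonal_mul_diagonal]
        rw [← diagonal_one]
        congr 1
        ext i
        norm_cast
        have := Real.mul_self_sqrt (hpos i).le
        have h0 : Real.sqrt (hH.eigenvalues i) ≠ 0 := (Real.sqrt_pos.mpr (hpos i)).ne'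
        field_simp
        rw [sq]; exact this.symm

open Filter Topology in
lemma tendsto_mul_ld {m : ℕ} (i : Fin d) {A : ℕ → Matrix (Fin m) (Fin d) ℂ} {A0} {B : ℕ → Matrix (Fin d) (Fin d) ℂ} {B0}
    (hA : Tendsto A atTop (𝓝 A0)) (hB : Tendsto B atTop (𝓝 B0)) :
    Tendsto (fun n => A n * ld (B n) i) atTop (𝓝 (A0 * ld B0 i)) := by
  have hA' : ∀ a b, Tendsto (fun n => A n a b) atTop (𝓝 (A0 a b)) := fun a b =>
    tendsto_pi_nhds.mp (tendsto_pi_nhds.mp hA a) b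
  have hB' : ∀ a b, Tendsto (fun n => B n a b) atTop (𝓝 (B0 a b)) := fun a b =>
    tendsto_pi_nhds.mp (tendsto_pi_nhds.mp hB a) b
  refine tendsto_pi_nhds.mpr (fun a => tendsto_pi_nhds.mpr (fun b => ?_))
  simp only [Matrix.mul_apply, ld, submatrix_apply, id]
  exact tendsto_finset_sum _ (fun c _ => (hA' a c).mul (hB' c b))

variable {J : Type} [Fintype J]

open Filter Topology in
lemma generic_H (d : ℕ) : ∃ H : J → Matrix (Fin d) (Fin d) ℂ, (∀ j, (H j).det ≠ 0) ∧
    ∀ (w : J → Fin d → ℝ) (κ : ℝ), (∀ j i, 0 ≤ gap (w j) i) → Solv w κ → Semi H w κ := by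
  obtain ⟨x, hx⟩ := generic (J × Fin d × Fin d)
  obtain ⟨H, hHx⟩ : ∃ H : J → Matrix (Fin d) (Fin d) ℂ, ∀ j a b, H j a b = x (j, a, b) :=
    ⟨fun j a b => x (j,a,b), fun _ _ _ => rfl⟩
  have approx : ∀ H0 : J → Matrix (Fin d) (Fin d) ℂ, ∃ τ : ℕ → (ℂ →+* ℂ),
      ∀ j, Tendsto (fun n => (H j).map (τ n)) atTop (𝓝 (H0 j)) := by
    intro H0
    choose τ hτ using fun n : ℕ => hx (fun q => H0 q.1 q.2.1 q.2.2) (1 / ((n:ℝ) + 1)) (by positivity)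
    refine ⟨τ, fun j => ?_⟩
    refine tendsto_pi_nhds.mpr (fun a => tendsto_pi_nhds.mpr (fun b => ?_))
    rw [tendsto_iff_norm_sub_tendsto_zero]
    refine squeeze_zero (fun _ => norm_nonneg _) (fun n => ?_) (tendsto_one_div_add_atTop_nhds_zero_nat (𝕜 := ℝ))
    have := (hτ n (j, a, b)).le
    simpa [hHx] using this
  refine ⟨H, ?_, ?_⟩
  · intro j h0
    obtain ⟨τ, hτ⟩ := approx (fun _ => 1)
    have h1 := ((continuous_id.matrix_det).tendsto (1 : Matrix (Fin d) (Fin d) ℂ)).comp (hτ j)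
    have h2 : (fun n => ((H j).map (τ n)).det) = fun _ => 0 := by
      ext n
      have := RingHom.map_det (τ n) (H j)
      rw [h0, map_zero] at this
      exact this.symm
    simp only [Function.comp_def, id] at h1
    rw [h2] at h1
    simp at h1
  · rintro w κ hg ⟨U, hU, hs⟩ m p hp
    have hsemi := semi_of_solv hg hU hs
    obtain ⟨τ, hτ⟩ := approx U
    choose t ht using fun n => exists_ortho (p.map (τ n)) (pᴴ.map (τ n)) (by
      rw [← Matrix.map_mul, hp]; simp)
    haveI : FirstCountableTopology (Matrix (Fin m) (Fin d) ℂ) :=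
      inferInstanceAs (FirstCountableTopology (Fin m → Fin d → ℂ))
    obtain ⟨p0, hp0, φ, hφ, hlim⟩ := (isCompact_coiso (d := d) m).tendsto_subseq (x := fun n => t n * p.map (τ n)) ht
    refine (hsemi m p0 hp0).trans ?_
    have key : ∀ j i, (p0 * ld (U j) i).rank ≤ (p * ld (H j) i).rank := by
      intro j i
      have hl := tendsto_mul_ld i hlim ((hτ j).comp hφ.tendsto_atTop)
      simp only [Function.comp_def] at hl
      obtain ⟨n, hn⟩ := (rank_lsc _ _ hl).exists
      refine hn.trans ?_
      rw [Matrix.mul_assoc]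
      refine (rank_mul_le_right _ _).trans ?_
      have : p.map (τ (φ n)) * ld ((H j).map (τ (φ n))) i = (p * ld (H j) i).map (τ (φ n)) := by
        rw [Matrix.map_mul]; rfl
      rw [this]
      exact rank_map_le _ _
    apply Finset.sum_le_sum; intro j _
    apply Finset.sum_le_sum; intro i _
    apply mul_le_mul_of_nonneg_left _ (hg j i)
    exact_mod_cast key j i

end HC
end

section
namespace HC
open Matrix

section
variable {n : Type*} [DecidableEq n] [Fintype n]

lemma det_dg (x : n → ℝ) : (dg x).det = ((∏ i, x i : ℝ) : ℂ) := by
  simp [dg, det_diagonal]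

lemma det_conjU {U : Matrix n n ℂ} (hU : IsU U) (M : Matrix n n ℂ) : (U * M * Uᴴ).det = M.det := by
  rw [det_mul, det_mul]
  have : U.det * Uᴴ.det = 1 := by rw [← det_mul, hU.2, det_one]
  linear_combination M.det * this

lemma one_eq_conj {U : Matrix n n ℂ} (hU : IsU U) : (1 : Matrix n n ℂ) = U * dg (fun _ => 1) * Uᴴ := by
  have : (dg (fun _ : n => (1:ℝ))) = 1 := by simp [dg]
  rw [this, Matrix.mul_one, hU.2]

lemma det_one_add_psd {B : Matrix n n ℂ} (hB : B.PosSemidef) : 1 ≤ (1 + B).det.re := by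
  obtain ⟨U, hU, h⟩ := spectral hB.1
  have : 1 + B = U * dg (fun i => 1 + hB.1.eigenvalues i) * Uᴴ := by
    have e : dg (fun i => 1 + hB.1.eigenvalues i) = dg (fun _ => 1) + dg hB.1.eigenvalues := by
      simp only [dg, diagonal_add]; congr 1; ext i; push_cast; rfl
    rw [e, Matrix.mul_add, Matrix.add_mul, ← one_eq_conj hU, ← h]
  rw [this, det_conjU hU, det_dg, Complex.ofReal_re]
  have := Finset.prod_le_prod (s := univ) (f := fun _ : n => (1:ℝ)) (g := fun i => 1 + hB.1.eigenvalues i) (by simp)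
    (fun i _ => by have := hB.eigenvalues_nonneg i; linarith)
  simpa using this

lemma det_conj_re (C B : Matrix n n ℂ) : (Cᴴ * B * C).det.re = ‖C.det‖ ^ 2 * B.det.re := by
  rw [det_mul, det_mul, det_conjTranspose]
  have : star C.det * B.det * C.det = ((‖C.det‖ ^ 2 : ℝ) : ℂ) * B.det := by
    have := Complex.conj_mul' C.det
    rw [Complex.star_def]
    push_cast
    rw [← this]; ring
  rw [this, Complex.re_ofReal_mul]

lemma det_add_ge (C B : Matrix n n ℂ) (hC : C.det ≠ 0) (hB : B.PosSemidef) :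
    ‖C.det‖ ^ 2 ≤ (Cᴴ * C + B).det.re := by
  have hu : IsUnit C.det := isUnit_iff_ne_zero.mpr hC
  have h1 : Cᴴ * C + B = Cᴴ * (1 + (C⁻¹)ᴴ * B * C⁻¹) * C := by
    rw [Matrix.mul_add, Matrix.add_mul, Matrix.mul_one]
    congr 1
    have e1 : C⁻¹ * C = 1 := nonsing_inv_mul C hu
    have e2 : Cᴴ * (C⁻¹)ᴴ = 1 := by rw [← conjTranspose_mul, e1, conjTranspose_one]
    calc B = (Cᴴ * (C⁻¹)ᴴ) * B * (C⁻¹ * C) := by rw [e1, e2]; simp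
      _ = _ := by simp only [Matrix.mul_assoc]
  rw [h1, det_conj_re]
  have := det_one_add_psd (hB.conjTranspose_mul_mul_same C⁻¹)
  nlinarith [sq_nonneg ‖C.det‖]

lemma det_sub_ge {d : ℕ} (L : Matrix (Fin d) n ℂ) (y : Fin d → ℝ) (hy : ∀ i, 0 < y i) (σ : n → Fin d)
    (hσ : Function.Injective σ) (hL : (L.submatrix σ id).det ≠ 0) :
    (∏ c, y (σ c)) * ‖(L.submatrix σ id).det‖ ^ 2 ≤ (Lᴴ * dg y * L).det.re := by
  classical
  set LT := L.submatrix σ id with hLT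
  set C := dg (fun c => Real.sqrt (y (σ c))) * LT with hC
  have hCd : ‖C.det‖ ^ 2 = (∏ c, y (σ c)) * ‖LT.det‖ ^ 2 := by
    rw [hC, det_mul, det_dg, norm_mul, mul_pow]
    congr 1
    rw [Complex.norm_real, Real.norm_eq_abs, sq_abs, ← Finset.prod_pow]
    apply Finset.prod_congr rfl
    intro c _
    exact Real.sq_sqrt (hy _).le
  have hpos : 0 < ∏ c, y (σ c) := Finset.prod_pos (fun c _ => hy _)
  have hC0 : C.det ≠ 0 := by
    intro h
    rw [h] at hCd
    have : 0 < ‖LT.det‖ := norm_pos_iff.mpr hL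
    have : 0 < (∏ c, y (σ c)) * ‖LT.det‖ ^ 2 := by positivity
    rw [← hCd] at this
    simp at this
  set y' : Fin d → ℝ := fun r => if r ∈ Set.range σ then 0 else y r with hy'
  have hB : (Lᴴ * dg y' * L).PosSemidef := by
    apply PosSemidef.conjTranspose_mul_mul_same
    apply dg_posSemidef
    intro i
    simp only [hy']
    split
    · exact le_rfl
    · exact (hy i).le
  have := det_add_ge C _ hC0 hB
  rw [hCd] at this
  convert this using 4
  ext a b
  rw [Matrix.add_apply, hC, conjTranspose_mul, dg_herm]
  have e1 : (LTᴴ * dg (fun c => Real.sqrt (y (σ c))) * (dg (fun c => Real.sqrt (y (σ c))) * LT)) a b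
     = ∑ c, star (L (σ c) a) * (y (σ c) : ℂ) * L (σ c) b := by
    rw [Matrix.mul_apply]
    apply Finset.sum_congr rfl
    intro c _
    simp only [dg, mul_diagonal, diagonal_mul, conjTranspose_apply, hLT, submatrix_apply, id]
    have : ((y (σ c) : ℝ) : ℂ) = (Real.sqrt (y (σ c)) : ℂ) * (Real.sqrt (y (σ c)) : ℂ) := by
      rw [← Complex.ofReal_mul, Real.mul_self_sqrt (hy _).le]
    rw [this]; ring
  have e2 : ∀ z : Fin d → ℝ, (Lᴴ * dg z * L) a b = ∑ r, star (L r a) * (z r : ℂ) * L r b := by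
    intro z
    rw [Matrix.mul_apply]
    simp only [dg, mul_diagonal, conjTranspose_apply]
  rw [e1, e2, e2]
  have e3 : ∑ c, star (L (σ c) a) * (y (σ c) : ℂ) * L (σ c) b = ∑ r, if r ∈ Set.range σ then star (L r a) * (y r : ℂ) * L r b else 0 := by
    rw [← Finset.sum_filter, ← Finset.sum_image (s := univ) (g := σ) (f := fun r => star (L r a) * (y r : ℂ) * L r b) hσ.injOn]
    apply Finset.sum_congr _ (fun _ _ => rfl)
    ext r; simp
  rw [e3, ← Finset.sum_add_distrib]
  apply Finset.sum_congr rfl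
  intro r _
  simp only [hy']
  by_cases h : r ∈ Set.range σ
  · simp [h]
  · simp [h]
end

lemma greedy {d : ℕ} {V : Type*} [AddCommGroup V] [Module ℂ V] (v : Fin d → V) :
    ∃ T : Finset (Fin d), LinearIndepOn ℂ v (T : Set (Fin d)) ∧
      ∀ m : ℕ, Submodule.span ℂ (v '' {r | (r : ℕ) < m}) ≤ Submodule.span ℂ (v '' {r | r ∈ T ∧ (r:ℕ) < m}) := by
  classical
  have key : ∀ k : ℕ, k ≤ d → ∃ T : Finset (Fin d), (∀ r ∈ T, (r:ℕ) < k) ∧ LinearIndepOn ℂ v (T : Set (Fin d)) ∧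
      ∀ m ≤ k, Submodule.span ℂ (v '' {r | (r : ℕ) < m}) ≤ Submodule.span ℂ (v '' {r | r ∈ T ∧ (r:ℕ) < m}) := by
    intro k
    induction k with
    | zero =>
      intro _
      refine ⟨∅, by simp, by simp, ?_⟩
      intro m hm
      have : m = 0 := by omega
      subst this; simp
    | succ k ih =>
      intro hk
      obtain ⟨T, h1, h2, h3⟩ := ih (by omega)
      let q : Fin d := ⟨k, by omega⟩
      have hTk : {r : Fin d | r ∈ T ∧ (r:ℕ) < k} = (T : Set (Fin d)) := by
        ext r; simp; exact h1 r
      have hsplit : {r : Fin d | (r : ℕ) < k + 1} = insert q {r : Fin d | (r : ℕ) < k} := by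
        ext r; simp [q, Fin.ext_iff]; omega
      by_cases hq : v q ∈ Submodule.span ℂ (v '' (T : Set (Fin d)))
      · refine ⟨T, fun r hr => (h1 r hr).trans (by omega), h2, ?_⟩
        intro m hm
        rcases Nat.lt_or_ge m (k+1) with h | h
        · exact h3 m (by omega)
        · have : m = k + 1 := by omega
          subst this
          rw [Submodule.span_le]
          rintro _ ⟨r, hr, rfl⟩
          have hTk' : {r : Fin d | r ∈ T ∧ (r:ℕ) < k + 1} = (T : Set (Fin d)) := by
            ext r; simp; intro hr; have := h1 r hr; omega
          rw [hTk']
          rw [hsplit] at hr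
          rcases hr with rfl | hr
          · exact hq
          · have := h3 k le_rfl (Submodule.subset_span ⟨r, hr, rfl⟩)
            rwa [hTk] at this
      · refine ⟨insert q T, ?_, ?_, ?_⟩
        · intro r hr
          rcases Finset.mem_insert.mp hr with rfl | hr
          · simp [q]
          · exact (h1 r hr).trans (by omega)
        · rw [Finset.coe_insert]
          exact h2.insert hq
        · intro m hm
          rcases Nat.lt_or_ge m (k+1) with h | h
          · refine (h3 m (by omega)).trans (Submodule.span_mono (Set.image_mono ?_))
            intro r hr
            exact ⟨Finset.mem_insert_of_mem hr.1, hr.2⟩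
          · have : m = k + 1 := by omega
            subst this
            rw [Submodule.span_le]
            rintro _ ⟨r, hr, rfl⟩
            rw [hsplit] at hr
            rcases hr with rfl | hr
            · exact Submodule.subset_span ⟨q, ⟨Finset.mem_insert_self _ _, by simp [q]⟩, rfl⟩
            · have := h3 k le_rfl (Submodule.subset_span ⟨r, hr, rfl⟩)
              refine Submodule.span_mono (Set.image_mono ?_) this
              intro r hr
              exact ⟨Finset.mem_insert_of_mem hr.1, hr.2.trans (by omega)⟩
  obtain ⟨T, _, h2, h3⟩ := key d le_rfl
  refine ⟨T, h2, fun m => ?_⟩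
  rcases Nat.lt_or_ge d m with h | h
  · have := h3 d le_rfl
    have e1 : {r : Fin d | (r:ℕ) < d} = {r : Fin d | (r:ℕ) < m} := by ext r; simp; omega
    have e2 : {r : Fin d | r ∈ T ∧ (r:ℕ) < d} = {r : Fin d | r ∈ T ∧ (r:ℕ) < m} := by ext r; simp; intro _; omega
    rwa [e1, e2] at this
  · exact h3 m h

/-- greedy row selection -/
lemma greedy_rows {d : ℕ} {n : Type*} [DecidableEq n] [Fintype n] (M : Matrix (Fin d) n ℂ) (hM : M.rank = Fintype.card n) :
    ∃ σ : n → Fin d, Function.Injective σ ∧ (M.submatrix σ id).det ≠ 0 ∧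
      ∀ (m : ℕ) (hm : m ≤ d), (M.submatrix (Fin.castLE hm) id).rank ≤ (univ.filter (fun c : n => (σ c : ℕ) < m)).card := by
  classical
  obtain ⟨T, h1, h2⟩ := greedy M.row
  have hfr : ∀ (m : ℕ) (hm : m ≤ d), (M.submatrix (Fin.castLE hm) id).rank ≤ (T.filter (fun r : Fin d => (r : ℕ) < m)).card := by
    intro m hm
    rw [rank_eq_finrank_span_row]
    have e : Set.range (M.submatrix (Fin.castLE hm) id).row = M.row '' {r | (r:ℕ) < m} := by
      ext z
      constructor
      · rintro ⟨r, rfl⟩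
        exact ⟨Fin.castLE hm r, by simp, rfl⟩
      · rintro ⟨r, hr, rfl⟩
        exact ⟨⟨r, hr⟩, rfl⟩
    rw [e]
    refine (Submodule.finrank_mono (h2 m)).trans ?_
    have e2 : M.row '' {r | r ∈ T ∧ (r:ℕ) < m} = (((T.filter (fun r : Fin d => (r : ℕ) < m)).image M.row : Finset _) : Set _) := by
      ext z; simp
    rw [e2]
    exact (finrank_span_finset_le_card _).trans Finset.card_image_le
  have hc1 : Fintype.card n ≤ T.card := by
    have := hfr d le_rfl
    have e : M.submatrix (Fin.castLE (le_refl d)) id = M := by ext; rfl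
    rw [e, hM] at this
    exact this.trans (Finset.card_le_card (Finset.filter_subset _ _))
  have hc2 : T.card ≤ Fintype.card n := by
    have := h1.fintype_card_le_finrank
    simpa using this
  have hc : Fintype.card n = Fintype.card T := by
    rw [Fintype.card_coe]; omega
  let e := Fintype.equivOfCardEq hc
  refine ⟨fun c => (e c : Fin d), fun a b h => e.injective (Subtype.ext h), ?_, ?_⟩
  · have hli : LinearIndependent ℂ (M.submatrix (fun c => (e c : Fin d)) id).row := by
      have : LinearIndependent ℂ (fun t : T => M.row t) := h1
      exact this.comp e e.injective
    rw [linearIndependent_rows_iff_isUnit, isUnit_iff_isUnit_det, isUnit_iff_ne_zero] at hli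
    exact hli
  · intro m hm
    refine (hfr m hm).trans ?_
    apply le_of_eq
    symm
    apply Finset.card_bij (fun c _ => (e c : Fin d))
    · intro c hc
      simp at hc
      simp [hc]
    · intro a _ b _ h
      exact e.injective (Subtype.ext h)
    · intro r hr
      simp at hr
      exact ⟨e.symm ⟨r, hr.1⟩, by simpa using hr.2, by simp⟩
end HC
end

section
namespace HC
open Matrix
variable {d : ℕ} {J : Type} [Fintype J]

noncomputable def phi (H : J → Matrix (Fin d) (Fin d) ℂ) (w : J → Fin d → ℝ) (κ : ℝ) (X : Matrix (Fin d) (Fin d) ℂ) : ℝ :=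
  ∑ j, ∑ i, gap (w j) i * Real.log ((ld (H j) i)ᴴ * X * ld (H j) i).det.re - κ * Real.log X.det.re

lemma ld_rank {N : Matrix (Fin d) (Fin d) ℂ} (hN : N.det ≠ 0) (i : Fin d) :
    (ld N i).rank = Fintype.card {c : Fin d // c ≤ i} := by
  have h : IsUnit N := (isUnit_iff_isUnit_det _).mpr (isUnit_iff_ne_zero.mpr hN)
  have h1 := (linearIndependent_cols_iff_isUnit (A := N)).mpr h
  have h2 : LinearIndependent ℂ (ld N i)ᵀ.row := h1.comp (Subtype.val : {c : Fin d // c ≤ i} → Fin d) Subtype.val_injective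
  rw [← rank_transpose]
  exact h2.rank_matrix

lemma IsU.det_ne {U : Matrix (Fin d) (Fin d) ℂ} (hU : IsU U) : U.det ≠ 0 := by
  intro h
  have := congrArg Matrix.det hU.1
  rw [det_mul, h] at this
  simp at this

lemma isCompact_U : IsCompact {U : Matrix (Fin d) (Fin d) ℂ | IsU U} := by
  have : {U : Matrix (Fin d) (Fin d) ℂ | IsU U} = {p : Matrix (Fin d) (Fin d) ℂ | p * pᴴ = 1} := by
    ext U
    exact ⟨fun h => h.2, fun h => ⟨_root_.mul_eq_one_comm.mp h, h⟩⟩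
  rw [this]
  exact isCompact_coiso d

lemma cont_det_sub (i : Fin d) (N : Matrix (Fin d) (Fin d) ℂ) (σ : {c : Fin d // c ≤ i} → Fin d) :
    Continuous (fun U : Matrix (Fin d) (Fin d) ℂ => ‖((ld (Uᴴ * N) i).submatrix σ id).det‖) := by
  apply Continuous.norm
  apply Continuous.matrix_det
  apply continuous_matrix
  intro a b
  simp only [submatrix_apply, ld, Matrix.mul_apply, conjTranspose_apply, id]
  refine continuous_finset_sum _ (fun c _ => Continuous.mul ?_ continuous_const)
  exact (continuous_apply_apply c (σ a) : Continuous (fun U : Fin d → Fin d → ℂ => U c (σ a))).star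

lemma sel_bound {H : J → Matrix (Fin d) (Fin d) ℂ} {w : J → Fin d → ℝ} {κ : ℝ}
    (hH : ∀ j, (H j).det ≠ 0) (hg : ∀ j i, 0 ≤ gap (w j) i) (hs : Semi H w κ)
    (htr : ∑ j, ∑ i, w j i = κ * d) {U0 : Matrix (Fin d) (Fin d) ℂ} (hU0 : IsU U0) :
    ∃ σ : ∀ (j : J) (i : Fin d), {c : Fin d // c ≤ i} → Fin d, (∀ j i, Function.Injective (σ j i)) ∧
      (∀ j i, ((ld (U0ᴴ * H j) i).submatrix (σ j i) id).det ≠ 0) ∧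
      ∀ x : Fin d → ℝ, Antitone x → κ * ∑ r, x r ≤ ∑ j, ∑ i, gap (w j) i * ∑ c, x (σ j i c) := by
  classical
  choose σ h1 h2 h3 using fun (j : J) (i : Fin d) => greedy_rows (ld (U0ᴴ * H j) i)
    (ld_rank (by rw [det_mul]; exact mul_ne_zero hU0.ct.det_ne (hH j)) i)
  refine ⟨σ, h1, h2, ?_⟩
  intro x hx
  let T : J → Fin d → Fin d → ℝ := fun j i r => ((univ.filter (fun c => σ j i c = r)).card : ℝ)
  have hT : ∀ j i (z : Fin d → ℝ), ∑ c, z (σ j i c) = ∑ r, z r * T j i r := by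
    intro j i z
    rw [← Finset.sum_fiberwise univ (σ j i)]
    apply Finset.sum_congr rfl
    intro r _
    rw [Finset.sum_congr rfl (g := fun _ => z r) (by intro c hc; rw [(Finset.mem_filter.mp hc).2])]
    simp [T, mul_comm]
  let u : Fin d → ℝ := fun r => (∑ j, ∑ i, gap (w j) i * T j i r) - κ
  have hsum : ∀ z : Fin d → ℝ, ∑ r, z r * u r = (∑ j, ∑ i, gap (w j) i * ∑ c, z (σ j i c)) - κ * ∑ r, z r := by
    intro z
    simp only [u, mul_sub, Finset.sum_sub_distrib, hT, Finset.mul_sum]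
    congr 1
    · rw [Finset.sum_comm]
      apply Finset.sum_congr rfl; intro j _
      rw [Finset.sum_comm]
      apply Finset.sum_congr rfl; intro i _
      apply Finset.sum_congr rfl; intro r _
      ring
    · apply Finset.sum_congr rfl; intro r _; ring
  have hab := abel_nonneg x u hx ?_ ?_
  · rw [hsum] at hab; linarith
  · intro m
    have hm : (m : ℕ) + 1 ≤ d := m.2
    have e : ∑ i ∈ Finset.Iic m, u i = ∑ r : Fin d, (if (r:ℕ) < m + 1 then (1:ℝ) else 0) * u r := by
      simp only [ite_mul, one_mul, zero_mul]
      rw [← Finset.sum_filter]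
      apply Finset.sum_congr _ (fun _ _ => rfl)
      ext r; simp only [Finset.mem_filter, Finset.mem_univ, true_and, Finset.mem_Iic, Fin.le_def]; omega
    rw [e, hsum]
    have hp := hs (m+1) (U0ᴴ.submatrix (Fin.castLE hm) id) (by
      have : (U0ᴴ.submatrix (Fin.castLE hm) id) * (U0ᴴ.submatrix (Fin.castLE hm) id)ᴴ = (U0ᴴ * U0).submatrix (Fin.castLE hm) (Fin.castLE hm) := by
        ext a b; simp [Matrix.mul_apply]
      rw [this, hU0.1]
      rw [submatrix_one _ (Fin.castLE_injective hm)])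
    have hcard : ∑ r : Fin d, (if (r:ℕ) < m + 1 then (1:ℝ) else 0) = ((m + 1 : ℕ) : ℝ) := by
      rw [Finset.sum_boole]
      congr 1
      have : (univ.filter (fun r : Fin d => (r:ℕ) < m + 1)) = Finset.Iic m := by
        ext r; simp only [Finset.mem_filter, Finset.mem_univ, true_and, Finset.mem_Iic, Fin.le_def]; omega
      rw [this]; simp
    rw [hcard, sub_nonneg]
    refine hp.trans ?_
    apply Finset.sum_le_sum; intro j _
    apply Finset.sum_le_sum; intro i _
    apply mul_le_mul_of_nonneg_left _ (hg j i)
    rw [Finset.sum_boole]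
    have := h3 j i (m+1) hm
    have e3 : (ld (U0ᴴ * H j) i).submatrix (Fin.castLE hm) id = U0ᴴ.submatrix (Fin.castLE hm) id * ld (H j) i := by
      ext a b; simp [Matrix.mul_apply, ld]
    rw [e3] at this
    exact_mod_cast this
  · have := hsum (fun _ => 1)
    simp only [one_mul] at this
    rw [this]
    have e : ∀ j, ∑ i, gap (w j) i * ∑ c : {c : Fin d // c ≤ i}, (1:ℝ) = ∑ i, w j i := by
      intro j
      have := gap_sum (w j) (fun _ => (1:ℝ))
      simp only [smul_eq_mul, mul_one] at this
      rw [← this]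
      apply Finset.sum_congr rfl; intro i _
      rw [sum_sub i (fun _ => (1:ℝ))]
    simp only [e, htr]
    simp

open Filter Topology in
lemma phi_bdd {H : J → Matrix (Fin d) (Fin d) ℂ} {w : J → Fin d → ℝ} {κ : ℝ}
    (hH : ∀ j, (H j).det ≠ 0) (hg : ∀ j i, 0 ≤ gap (w j) i) (hs : Semi H w κ)
    (htr : ∑ j, ∑ i, w j i = κ * d) : ∃ c : ℝ, ∀ X : Matrix (Fin d) (Fin d) ℂ, X.PosDef → c ≤ phi H w κ X := by
  have main : ∃ c : ℝ, ∀ U ∈ {U : Matrix (Fin d) (Fin d) ℂ | IsU U}, IsU U → ∀ x : Fin d → ℝ, Antitone x →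
      c ≤ phi H w κ (U * dg (fun i => Real.exp (x i)) * Uᴴ) := by
    refine IsCompact.induction_on (p := fun s => ∃ c : ℝ, ∀ U ∈ s, IsU U → ∀ x : Fin d → ℝ, Antitone x →
      c ≤ phi H w κ (U * dg (fun i => Real.exp (x i)) * Uᴴ)) isCompact_U ?_ ?_ ?_ ?_
    · exact ⟨0, by simp⟩
    · rintro s t hst ⟨c, hc⟩
      exact ⟨c, fun U hU => hc U (hst hU)⟩
    · rintro s t ⟨c, hc⟩ ⟨c', hc'⟩
      refine ⟨min c c', ?_⟩
      rintro U (hU | hU) h x hx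
      · exact (min_le_left _ _).trans (hc U hU h x hx)
      · exact (min_le_right _ _).trans (hc' U hU h x hx)
    · intro U0 hU0
      obtain ⟨σ, hσ, hdet, hx⟩ := sel_bound hH hg hs htr hU0
      let D : J → Fin d → ℝ := fun j i => ‖((ld (U0ᴴ * H j) i).submatrix (σ j i) id).det‖
      have hD : ∀ j i, 0 < D j i := fun j i => norm_pos_iff.mpr (hdet j i)
      have hev : ∀ᶠ U in 𝓝 U0, ∀ j i, D j i / 2 < ‖((ld (Uᴴ * H j) i).submatrix (σ j i) id).det‖ := by
        rw [eventually_all]; intro j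
        rw [eventually_all]; intro i
        exact (cont_det_sub i (H j) (σ j i)).continuousAt.eventually (lt_mem_nhds (half_lt_self (hD j i)))
      refine ⟨_, mem_nhdsWithin_of_mem_nhds hev, ∑ j, ∑ i, gap (w j) i * Real.log ((D j i / 2) ^ 2), ?_⟩
      intro U hUD hU x hxa
      have h1 := hx x hxa
      unfold phi
      have e1 : Real.log (U * dg (fun i => Real.exp (x i)) * Uᴴ).det.re = ∑ r, x r := by
        rw [det_conjU hU, det_dg, Complex.ofReal_re, ← Real.exp_sum, Real.log_exp]
      rw [e1]
      have h2 : ∀ j i, (∑ c, x (σ j i c)) + Real.log ((D j i / 2) ^ 2) ≤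
          Real.log ((ld (H j) i)ᴴ * (U * dg (fun i => Real.exp (x i)) * Uᴴ) * ld (H j) i).det.re := by
        intro j i
        have hdl := hUD j i
        have hd0 : 0 < D j i / 2 := by have := hD j i; linarith
        have e2 : (ld (H j) i)ᴴ * (U * dg (fun i => Real.exp (x i)) * Uᴴ) * ld (H j) i
            = (ld (Uᴴ * H j) i)ᴴ * dg (fun i => Real.exp (x i)) * ld (Uᴴ * H j) i := by
          rw [← mul_ld, conjTranspose_mul, conjTranspose_conjTranspose]
          simp only [Matrix.mul_assoc]
        rw [e2]
        have h3 := det_sub_ge (ld (Uᴴ * H j) i) (fun i => Real.exp (x i)) (fun i => Real.exp_pos _) (σ j i) (hσ j i)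
          (norm_pos_iff.mp (hd0.trans hdl))
        have hpos : 0 < (∏ c, Real.exp (x (σ j i c))) * (D j i / 2) ^ 2 :=
          mul_pos (Finset.prod_pos (fun _ _ => Real.exp_pos _)) (by positivity)
        have h4 : (∏ c, Real.exp (x (σ j i c))) * (D j i / 2) ^ 2 ≤ ((ld (Uᴴ * H j) i)ᴴ * dg (fun i => Real.exp (x i)) * ld (Uᴴ * H j) i).det.re := by
          refine le_trans ?_ h3
          apply mul_le_mul_of_nonneg_left _ (Finset.prod_nonneg (fun _ _ => (Real.exp_pos _).le))
          gcongr
        refine le_trans (le_of_eq ?_) (Real.log_le_log hpos h4)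
        rw [Real.log_mul (Finset.prod_pos (fun _ _ => Real.exp_pos _)).ne' (by positivity), ← Real.exp_sum, Real.log_exp]
      have h5 : ∑ j, ∑ i, gap (w j) i * ((∑ c, x (σ j i c)) + Real.log ((D j i / 2) ^ 2)) ≤ ∑ j, ∑ i, gap (w j) i * Real.log ((ld (H j) i)ᴴ * (U * dg (fun i => Real.exp (x i)) * Uᴴ) * ld (H j) i).det.re := by
        apply Finset.sum_le_sum; intro j _
        apply Finset.sum_le_sum; intro i _
        exact mul_le_mul_of_nonneg_left (h2 j i) (hg j i)
      simp only [mul_add, Finset.sum_add_distrib] at h5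
      linarith
  obtain ⟨c, hc⟩ := main
  refine ⟨c, fun X hX => ?_⟩
  obtain ⟨U, hU, hXU⟩ := spectral_sorted hX.1
  have hpos : ∀ i, 0 < eigsDesc X i := by
    intro i
    rw [eigsDesc, dif_pos hX.1, sortDesc_eq_comp]
    exact hX.eigenvalues_pos _
  have := hc U hU hU (fun i => Real.log (eigsDesc X i)) (by
    intro a b hab
    exact Real.log_le_log (hpos b) (eigsDesc_antitone X hab))
  have e : (fun i => Real.exp (Real.log (eigsDesc X i))) = eigsDesc X := by
    ext i; exact Real.exp_log (hpos i)
  rw [e, ← hXU] at this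
  exact this
end HC
end

section
namespace HC
open Matrix
variable {d : ℕ}

lemma qr (N : Matrix (Fin d) (Fin d) ℂ) : ∃ Q : Matrix (Fin d) (Fin d) ℂ, IsU Q ∧
    ∀ i, ∃ T : Matrix {c : Fin d // c ≤ i} {c : Fin d // c ≤ i} ℂ, ld N i = ld Q i * T := by
  let f : Fin d → EuclideanSpace ℂ (Fin d) := fun c => WithLp.toLp 2 (fun r => N r c)
  have hfr : Module.finrank ℂ (EuclideanSpace ℂ (Fin d)) = Fintype.card (Fin d) := by simp
  let b := InnerProductSpace.gramSchmidtOrthonormalBasis hfr f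
  have htri : ∀ i j, i < j → inner ℂ (b j) (f i) = 0 := fun i j hij =>
    InnerProductSpace.gramSchmidtOrthonormalBasis_inv_triangular hfr f hij
  obtain ⟨Q, hQ⟩ : ∃ Q : Matrix (Fin d) (Fin d) ℂ, ∀ r c, Q r c = b c r := ⟨fun r c => b c r, fun _ _ => rfl⟩
  have hin : ∀ (x y : EuclideanSpace ℂ (Fin d)), inner ℂ x y = ∑ r, star (x r) * y r := by
    intro x y
    rw [PiLp.inner_apply]
    apply Finset.sum_congr rfl
    intro r _
    simp [mul_comm]
  have hU : IsU Q := by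
    apply IsU.of_left
    ext a c
    rw [Matrix.mul_apply]
    simp only [conjTranspose_apply, hQ]
    rw [← hin, Matrix.one_apply]
    exact orthonormal_iff_ite.mp b.orthonormal a c
  have ht : ∀ a c, c < a → (Qᴴ * N) a c = 0 := by
    intro a c h
    rw [Matrix.mul_apply]
    simp only [conjTranspose_apply, hQ]
    have := htri c a h
    rw [hin] at this
    exact this
  refine ⟨Q, hU, fun i => ⟨(Qᴴ * N).submatrix Subtype.val Subtype.val, ?_⟩⟩
  have hN : N = Q * (Qᴴ * N) := by rw [← Matrix.mul_assoc, hU.2, Matrix.one_mul]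
  ext r c
  rw [Matrix.mul_apply]
  simp only [ld, submatrix_apply, id]
  rw [sum_sub i (fun a => Q r a * (Qᴴ * N) a c)]
  conv_lhs => rw [hN, Matrix.mul_apply]
  symm
  apply Finset.sum_subset (Finset.subset_univ _)
  intro a _ ha
  have : i < a := by simpa using ha
  rw [ht a c (lt_of_le_of_lt c.2 this), mul_zero]

lemma log_det_le {n : Type*} [DecidableEq n] [Fintype n] {Y : Matrix n n ℂ} (hY : Y.PosDef) :
    Real.log Y.det.re ≤ Y.trace.re - Fintype.card n := by
  have h1 := hY.1.det_eq_prod_eigenvalues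
  have h2 := hY.1.trace_eq_sum_eigenvalues
  have e1 : Y.det.re = ∏ i, hY.1.eigenvalues i := by
    rw [h1]; norm_cast
  have e2 : Y.trace.re = ∑ i, hY.1.eigenvalues i := by
    rw [h2]; norm_cast
  rw [e1, e2, Real.log_prod (fun i _ => (hY.eigenvalues_pos i).ne')]
  have : ∑ i, Real.log (hY.1.eigenvalues i) ≤ ∑ i, (hY.1.eigenvalues i - 1) :=
    Finset.sum_le_sum (fun i _ => Real.log_le_sub_one_of_pos (hY.eigenvalues_pos i))
  simpa [Finset.sum_sub_distrib] using this

lemma neg_log_le {u : ℝ} (hu : |u| ≤ 1/2) : - Real.log (1 - u) ≤ u + 2 * u ^ 2 := by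
  have h := abs_le.mp hu
  have hp : 0 < 1 - u := by linarith
  have h1 := Real.one_sub_inv_le_log_of_pos hp
  have h2 : (1 - u)⁻¹ ≤ 1 + u + 2 * u ^ 2 := by
    rw [inv_le_iff_one_le_mul₀ hp]
    nlinarith [mul_nonneg (sq_nonneg u) (by linarith : 0 ≤ 1 - 2 * u)]
  linarith

variable {J : Type} [Fintype J]

lemma inj_of_left {m n : Type*} [Fintype m] [Fintype n] [DecidableEq n] (A : Matrix m n ℂ) (B : Matrix n m ℂ) (h : B * A = 1) :
    Function.Injective A.mulVec := by
  intro x y hxy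
  have : B *ᵥ (A *ᵥ x) = B *ᵥ (A *ᵥ y) := by
    have hxy' : A *ᵥ x = A *ᵥ y := hxy
    rw [hxy']
  simpa [mulVec_mulVec, h] using this

lemma ld_left (A N : Matrix (Fin d) (Fin d) ℂ) (h : A * N = 1) (i : Fin d) :
    (A.submatrix (Subtype.val : {c : Fin d // c ≤ i} → Fin d) id) * ld N i = 1 := by
  have : (A.submatrix (Subtype.val : {c : Fin d // c ≤ i} → Fin d) id) * ld N i = (A * N).submatrix Subtype.val Subtype.val := by
    ext a b; simp [Matrix.mul_apply, ld]
  rw [this, h, submatrix_one _ Subtype.val_injective]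

noncomputable def Mm (w : J → Fin d → ℝ) (κ : ℝ) (Q : J → Matrix (Fin d) (Fin d) ℂ) : Matrix (Fin d) (Fin d) ℂ :=
  ∑ j, Q j * dg (w j) * (Q j)ᴴ - (κ : ℂ) • 1

lemma Mm_herm (w : J → Fin d → ℝ) (κ : ℝ) (Q : J → Matrix (Fin d) (Fin d) ℂ) : (Mm w κ Q).IsHermitian := by
  unfold Mm IsHermitian
  rw [conjTranspose_sub, conjTranspose_sum, conjTranspose_smul]
  simp only [(conj_herm _).eq]
  simp

lemma Mm_trace {w : J → Fin d → ℝ} {κ : ℝ} {Q : J → Matrix (Fin d) (Fin d) ℂ} (hQ : ∀ j, IsU (Q j))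
    (htr : ∑ j, ∑ i, w j i = κ * d) : (Mm w κ Q).trace = 0 := by
  unfold Mm
  rw [trace_sub, trace_sum]
  have : ∀ j, (Q j * dg (w j) * (Q j)ᴴ).trace = ((∑ i, w j i : ℝ) : ℂ) := by
    intro j; rw [trace_conjU (hQ j), trace_dg]
  simp only [this]
  rw [← Complex.ofReal_sum, htr]
  simp

lemma factor_psd {X : Matrix (Fin d) (Fin d) ℂ} (hX : X.PosSemidef) : ∃ g, X = gᴴ * g := by
  obtain ⟨U, hU, h⟩ := spectral hX.1
  refine ⟨dg (fun i => Real.sqrt (hX.1.eigenvalues i)) * Uᴴ, ?_⟩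
  rw [conjTranspose_mul, conjTranspose_conjTranspose, dg_herm]
  have e : dg hX.1.eigenvalues = dg (fun i => Real.sqrt (hX.1.eigenvalues i)) * dg (fun i => Real.sqrt (hX.1.eigenvalues i)) := by
    simp only [dg, diagonal_mul_diagonal]
    congr 1
    ext i
    rw [← Complex.ofReal_mul, Real.mul_self_sqrt (hX.eigenvalues_nonneg i)]
  have h' : X = U * (dg (fun i => Real.sqrt (hX.1.eigenvalues i)) * dg (fun i => Real.sqrt (hX.1.eigenvalues i))) * Uᴴ := by
    rw [← e]; exact h
  refine h'.trans ?_
  simp only [Matrix.mul_assoc]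

lemma descent {H : J → Matrix (Fin d) (Fin d) ℂ} {w : J → Fin d → ℝ} {κ : ℝ} (hκ : 0 ≤ κ)
    (hH : ∀ j, (H j).det ≠ 0) (hg : ∀ j i, 0 ≤ gap (w j) i)
    (htr : ∑ j, ∑ i, w j i = κ * d) {C t : ℝ}
    (hC : ∀ Q : J → Matrix (Fin d) (Fin d) ℂ, (∀ j, IsU (Q j)) → (Mm w κ Q * Mm w κ Q).trace.re ≤ C)
    (ht : 0 < t) (htC : t ^ 2 * C ≤ 1 / 4) (htκ : 2 * κ * t ≤ 1 / 2)
    {X : Matrix (Fin d) (Fin d) ℂ} (hX : X.PosDef) :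
    ∃ Q : J → Matrix (Fin d) (Fin d) ℂ, (∀ j, IsU (Q j)) ∧ ∃ X' : Matrix (Fin d) (Fin d) ℂ, X'.PosDef ∧
      phi H w κ X' ≤ phi H w κ X - t / 2 * (Mm w κ Q * Mm w κ Q).trace.re := by
  obtain ⟨g, hgX⟩ := factor_psd hX.posSemidef
  have hgd : g.det ≠ 0 := by
    intro h
    have := hX.det_pos
    rw [hgX, det_mul, h, mul_zero] at this
    exact lt_irrefl _ this
  choose Q hQ hT using fun j => qr (g * H j)
  refine ⟨Q, hQ, ?_⟩
  choose T hT using hT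
  obtain ⟨M, hM⟩ : ∃ M, M = Mm w κ Q := ⟨_, rfl⟩
  have hMh : M.IsHermitian := hM ▸ Mm_herm w κ Q
  rw [← hM]
  have hMC : (M * M).trace.re ≤ C := hM ▸ hC Q hQ
  have hMt : M.trace = 0 := hM ▸ Mm_trace hQ htr
  obtain ⟨V, hV, hMV⟩ := spectral_sorted hMh
  obtain ⟨m, hm⟩ : ∃ m, m = eigsDesc M := ⟨_, rfl⟩
  rw [← hm] at hMV
  have hsq : (M * M).trace.re = ∑ i, m i ^ 2 := by
    rw [trace_sq hMh, Complex.ofReal_re, hm]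
  have hsm : ∑ i, m i = 0 := by
    have := trace_eigsDesc hMh
    rw [hMt, ← hm] at this
    exact_mod_cast this.symm
  have hmi : ∀ i, |t * m i| ≤ 1 / 2 := by
    intro i
    have h1 : m i ^ 2 ≤ ∑ i, m i ^ 2 := Finset.single_le_sum (f := fun i => m i ^ 2) (fun _ _ => sq_nonneg _) (Finset.mem_univ i)
    rw [← hsq] at h1
    apply abs_le_of_sq_le_sq _ (by norm_num)
    have : t ^ 2 * m i ^ 2 ≤ t ^ 2 * C := mul_le_mul_of_nonneg_left (h1.trans hMC) (sq_nonneg t)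
    nlinarith
  obtain ⟨Y, hY⟩ : ∃ Y : Matrix (Fin d) (Fin d) ℂ, Y = 1 - (t : ℂ) • M := ⟨_, rfl⟩
  have hYV : Y = V * dg (fun i => 1 - t * m i) * Vᴴ := by
    have e : dg (fun i => 1 - t * m i) = 1 - (t : ℂ) • dg m := by
      ext a b
      by_cases hab : a = b
      · subst hab; simp [dg]
      · simp [dg, hab]
    rw [e, Matrix.mul_sub, Matrix.sub_mul, Matrix.mul_one, hV.2, Matrix.mul_smul, Matrix.smul_mul, ← hMV, hY]
  have hYpos : ∀ i, 0 < 1 - t * m i := by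
    intro i
    have := (abs_le.mp (hmi i)).2
    linarith
  have hYdet : Y.det.re = ∏ i, (1 - t * m i) := by
    rw [hYV, det_conjU hV, det_dg, Complex.ofReal_re]
  have hYpd : Y.PosDef := by
    rw [hYV]
    apply PosDef.mul_mul_conjTranspose_same
    · apply PosDef.diagonal
      intro i
      exact_mod_cast hYpos i
    · intro x y hxy
      have : (x ᵥ* V) ᵥ* Vᴴ = (y ᵥ* V) ᵥ* Vᴴ := congrArg (fun z => z ᵥ* Vᴴ) hxy
      simpa [vecMul_vecMul, hV.2] using this
  have hginj : Function.Injective g.mulVec := inj_of_left g g⁻¹ (nonsing_inv_mul g (isUnit_iff_ne_zero.mpr hgd))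
  refine ⟨gᴴ * Y * g, hYpd.conjTranspose_mul_mul_same hginj, ?_⟩
  have hlogY : -Real.log Y.det.re ≤ 2 * t ^ 2 * (M * M).trace.re := by
    rw [hYdet, Real.log_prod (fun i _ => (hYpos i).ne'), ← Finset.sum_neg_distrib]
    refine (Finset.sum_le_sum (fun i _ => neg_log_le (hmi i))).trans (le_of_eq ?_)
    rw [Finset.sum_add_distrib, ← Finset.mul_sum, hsm, hsq, Finset.mul_sum, mul_zero, zero_add]
    apply Finset.sum_congr rfl
    intro i _; ring
  have hX1 : Real.log (gᴴ * Y * g).det.re = Real.log X.det.re + Real.log Y.det.re := by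
    have e : X.det.re = ‖g.det‖ ^ 2 := by
      have := det_conj_re g 1
      rw [Matrix.mul_one, ← hgX] at this
      simpa using this
    rw [det_conj_re, e, Real.log_mul]
    · exact pow_ne_zero 2 (norm_ne_zero_iff.mpr hgd)
    · rw [hYdet]; exact (Finset.prod_pos (fun i _ => hYpos i)).ne'
  have hQl : ∀ j i, (ld (Q j) i)ᴴ * ld (Q j) i = 1 := by
    intro j i
    exact ld_left (Q j)ᴴ (Q j) (hQ j).1 i
  have hld : ∀ j i, Real.log ((ld (H j) i)ᴴ * (gᴴ * Y * g) * ld (H j) i).det.re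
      ≤ Real.log ((ld (H j) i)ᴴ * X * ld (H j) i).det.re - t * (M * (ld (Q j) i * (ld (Q j) i)ᴴ)).trace.re := by
    intro j i
    have e0 : ∀ B : Matrix (Fin d) (Fin d) ℂ, (ld (H j) i)ᴴ * (gᴴ * B * g) * ld (H j) i =
        (T j i)ᴴ * ((ld (Q j) i)ᴴ * B * ld (Q j) i) * T j i := by
      intro B
      have : (ld (H j) i)ᴴ * (gᴴ * B * g) * ld (H j) i = (g * ld (H j) i)ᴴ * B * (g * ld (H j) i) := by
        rw [conjTranspose_mul]; simp only [Matrix.mul_assoc]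
      rw [this, mul_ld, hT j i, conjTranspose_mul]; simp only [Matrix.mul_assoc]
    have eX : (ld (H j) i)ᴴ * X * ld (H j) i = (T j i)ᴴ * 1 * T j i := by
      have := e0 1
      rw [Matrix.mul_one, ← hgX, Matrix.mul_one, hQl] at this
      exact this
    have hTd : (T j i).det ≠ 0 := by
      have hdet : (g * H j).det ≠ 0 := by rw [det_mul]; exact mul_ne_zero hgd (hH j)
      have h1 := ld_left (g * H j)⁻¹ (g * H j) (nonsing_inv_mul _ (isUnit_iff_ne_zero.mpr hdet)) i
      rw [hT j i, ← Matrix.mul_assoc] at h1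
      intro h0
      have := congrArg Matrix.det h1
      rw [det_mul, h0, mul_zero, det_one] at this
      exact zero_ne_one this
    obtain ⟨Z, hZ⟩ : ∃ Z, Z = (ld (Q j) i)ᴴ * Y * ld (Q j) i := ⟨_, rfl⟩
    have hZpd : Z.PosDef := by
      rw [hZ]
      exact hYpd.conjTranspose_mul_mul_same (inj_of_left _ _ (hQl j i))
    have hZt : Z.trace.re = Fintype.card {c : Fin d // c ≤ i} - t * (M * (ld (Q j) i * (ld (Q j) i)ᴴ)).trace.re := by
      have : Z = 1 - (t:ℂ) • ((ld (Q j) i)ᴴ * M * ld (Q j) i) := by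
        rw [hZ, hY, Matrix.mul_sub, Matrix.sub_mul, Matrix.mul_one, hQl, Matrix.mul_smul, Matrix.smul_mul]
      rw [this, trace_sub, trace_one, trace_smul, Matrix.mul_assoc, Matrix.trace_mul_comm, Matrix.mul_assoc]
      simp
    have hlz := log_det_le hZpd
    rw [hZt] at hlz
    have hZp : 0 < Z.det.re := (Complex.pos_iff.mp hZpd.det_pos).1
    have hTp : 0 < ‖(T j i).det‖ ^ 2 := by
      have := norm_pos_iff.mpr hTd
      positivity
    rw [e0, eX, ← hZ, det_conj_re, det_conj_re, det_one, Complex.one_re, mul_one, Real.log_mul hTp.ne' hZp.ne']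
    linarith
  have hsum : ∑ j, ∑ i, gap (w j) i * (M * (ld (Q j) i * (ld (Q j) i)ᴴ)).trace.re = (M * M).trace.re := by
    have e1 : (∑ j, Q j * dg (w j) * (Q j)ᴴ) = M + (κ : ℂ) • 1 := by
      rw [hM, Mm]; abel
    have e2 : (M * (∑ j, Q j * dg (w j) * (Q j)ᴴ)).trace = (M * M).trace := by
      rw [e1, Matrix.mul_add, trace_add, Matrix.mul_smul, trace_smul, Matrix.mul_one, hMt]; simp
    rw [← e2, Matrix.mul_sum, trace_sum, Complex.re_sum]
    apply Finset.sum_congr rfl; intro j _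
    rw [← conj_gap, Matrix.mul_sum, trace_sum, Complex.re_sum]
    apply Finset.sum_congr rfl; intro i _
    rw [Matrix.mul_smul, trace_smul, Complex.real_smul, Complex.re_ofReal_mul]
  have h5 : ∑ j, ∑ i, gap (w j) i * Real.log ((ld (H j) i)ᴴ * (gᴴ * Y * g) * ld (H j) i).det.re ≤
      ∑ j, ∑ i, gap (w j) i * Real.log ((ld (H j) i)ᴴ * X * ld (H j) i).det.re - t * (M * M).trace.re := by
    rw [← hsum, Finset.mul_sum, ← Finset.sum_sub_distrib]
    apply Finset.sum_le_sum; intro j _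
    rw [Finset.mul_sum, ← Finset.sum_sub_distrib]
    apply Finset.sum_le_sum; intro i _
    have := mul_le_mul_of_nonneg_left (hld j i) (hg j i)
    linarith
  have hq0 : 0 ≤ (M * M).trace.re := by rw [hsq]; exact Finset.sum_nonneg (fun _ _ => sq_nonneg _)
  unfold phi
  rw [hX1]
  have h6 := mul_le_mul_of_nonneg_left hlogY hκ
  have h7 : (2 * κ * t) * (t * (M * M).trace.re) ≤ 1 / 2 * (t * (M * M).trace.re) :=
    mul_le_mul_of_nonneg_right htκ (mul_nonneg ht.le hq0)
  nlinarith

end HC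
end

section
namespace HC
open Matrix
variable {d : ℕ} {J : Type} [Fintype J]

lemma Mm_cont (w : J → Fin d → ℝ) (κ : ℝ) :
    Continuous (fun Q : J → Matrix (Fin d) (Fin d) ℂ => (Mm w κ Q * Mm w κ Q).trace.re) := by
  have h1 : Continuous (fun Q : J → Matrix (Fin d) (Fin d) ℂ => Mm w κ Q) := by
    unfold Mm
    apply Continuous.sub _ continuous_const
    refine continuous_finset_sum _ (fun j _ => ?_)
    exact ((continuous_apply j).matrix_mul continuous_const).matrix_mul (continuous_apply j).matrix_conjTranspose
  exact Complex.continuous_re.comp (h1.matrix_mul h1).matrix_trace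

lemma Mm_sq_nonneg (w : J → Fin d → ℝ) (κ : ℝ) (Q : J → Matrix (Fin d) (Fin d) ℂ) :
    0 ≤ (Mm w κ Q * Mm w κ Q).trace.re := by
  rw [trace_sq (Mm_herm w κ Q), Complex.ofReal_re]
  exact Finset.sum_nonneg (fun _ _ => sq_nonneg _)

lemma exists_t {C κ : ℝ} (hC0 : 0 ≤ C) (hκ : 0 ≤ κ) : ∃ t : ℝ, 0 < t ∧ t ^ 2 * C ≤ 1 / 4 ∧ 2 * κ * t ≤ 1 / 2 := by
  refine ⟨1 / (4 * (1 + C + κ)), by positivity, ?_, ?_⟩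
  · rw [div_pow, div_mul_eq_mul_div, div_le_div_iff₀ (by positivity) (by norm_num)]
    nlinarith [mul_nonneg hC0 hκ]
  · rw [mul_one_div, div_le_div_iff₀ (by positivity) (by norm_num)]
    nlinarith

lemma exists_min_max (w : J → Fin d → ℝ) (κ : ℝ) : ∃ Q0 Q1 : J → Matrix (Fin d) (Fin d) ℂ, (∀ j, IsU (Q0 j)) ∧
    (∀ Q : J → Matrix (Fin d) (Fin d) ℂ, (∀ j, IsU (Q j)) → (Mm w κ Q0 * Mm w κ Q0).trace.re ≤ (Mm w κ Q * Mm w κ Q).trace.re) ∧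
    (∀ Q : J → Matrix (Fin d) (Fin d) ℂ, (∀ j, IsU (Q j)) → (Mm w κ Q * Mm w κ Q).trace.re ≤ (Mm w κ Q1 * Mm w κ Q1).trace.re) := by
  have hK : IsCompact (Set.univ.pi (fun _ : J => {U : Matrix (Fin d) (Fin d) ℂ | IsU U})) :=
    isCompact_univ_pi (fun _ => isCompact_U)
  have hne : (Set.univ.pi (fun _ : J => {U : Matrix (Fin d) (Fin d) ℂ | IsU U})).Nonempty :=
    ⟨fun _ => 1, fun _ _ => IsU.one⟩
  obtain ⟨Q1, hQ1, hmax⟩ := hK.exists_isMaxOn hne (Mm_cont w κ).continuousOn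
  obtain ⟨Q0, hQ0, hmin⟩ := hK.exists_isMinOn hne (Mm_cont w κ).continuousOn
  refine ⟨Q0, Q1, fun j => hQ0 j (Set.mem_univ j), fun Q hQ => ?_, fun Q hQ => ?_⟩
  · exact isMinOn_iff.mp hmin Q (fun j _ => hQ j)
  · exact isMaxOn_iff.mp hmax Q (fun j _ => hQ j)

lemma solv_of_semi {H : J → Matrix (Fin d) (Fin d) ℂ} {w : J → Fin d → ℝ} {κ : ℝ} (hκ : 0 ≤ κ)
    (hH : ∀ j, (H j).det ≠ 0) (hg : ∀ j i, 0 ≤ gap (w j) i) (hs : Semi H w κ)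
    (htr : ∑ j, ∑ i, w j i = κ * d) : Solv w κ := by
  obtain ⟨Q0, Q1, hQ0, hmin, hmax⟩ := exists_min_max w κ
  rcases (Mm_sq_nonneg w κ Q0).eq_or_lt with h0 | hδ
  · refine ⟨Q0, hQ0, ?_⟩
    rw [trace_sq (Mm_herm w κ Q0), Complex.ofReal_re] at h0
    have hz := (Finset.sum_eq_zero_iff_of_nonneg (fun _ _ => sq_nonneg _)).mp h0.symm
    have hz' : eigsDesc (Mm w κ Q0) = fun _ => 0 := by
      ext i; simpa using hz i (Finset.mem_univ i)
    obtain ⟨V, hV, h⟩ := spectral_sorted (Mm_herm w κ Q0)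
    rw [hz'] at h
    have e : dg (fun _ : Fin d => (0:ℝ)) = 0 := by simp [dg]
    rw [e, Matrix.mul_zero, Matrix.zero_mul] at h
    unfold Mm at h
    exact sub_eq_zero.mp h
  · exfalso
    obtain ⟨c, hc⟩ := phi_bdd hH hg hs htr
    obtain ⟨δ, hδd⟩ : ∃ δ, δ = (Mm w κ Q0 * Mm w κ Q0).trace.re := ⟨_, rfl⟩
    obtain ⟨C, hCd⟩ : ∃ C, C = (Mm w κ Q1 * Mm w κ Q1).trace.re := ⟨_, rfl⟩
    rw [← hδd] at hδ
    have hC0 : 0 ≤ C := by rw [hCd]; exact Mm_sq_nonneg w κ Q1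
    have hmax' : ∀ Q : J → Matrix (Fin d) (Fin d) ℂ, (∀ j, IsU (Q j)) → (Mm w κ Q * Mm w κ Q).trace.re ≤ C :=
      by rw [hCd]; exact hmax
    have hmin' : ∀ Q : J → Matrix (Fin d) (Fin d) ℂ, (∀ j, IsU (Q j)) → δ ≤ (Mm w κ Q * Mm w κ Q).trace.re :=
      by rw [hδd]; exact hmin
    obtain ⟨t, ht, htC, htκ⟩ := exists_t hC0 hκ
    have it : ∀ n : ℕ, ∃ X : Matrix (Fin d) (Fin d) ℂ, X.PosDef ∧ phi H w κ X ≤ phi H w κ 1 - n * (t / 2 * δ) := by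
      intro n
      induction n with
      | zero => exact ⟨1, PosDef.one, by simp⟩
      | succ n ih =>
        obtain ⟨X, hX, hle⟩ := ih
        obtain ⟨Q, hQ, X', hX', hle'⟩ := descent hκ hH hg htr (C := C)
          hmax' ht htC htκ hX
        refine ⟨X', hX', ?_⟩
        have h1 : δ ≤ (Mm w κ Q * Mm w κ Q).trace.re := hmin' Q hQ
        have h2 : t / 2 * δ ≤ t / 2 * (Mm w κ Q * Mm w κ Q).trace.re := mul_le_mul_of_nonneg_left h1 (by positivity)
        push_cast
        linarith
    obtain ⟨n, hn⟩ := exists_nat_gt ((phi H w κ 1 - c) / (t / 2 * δ))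
    rw [div_lt_iff₀ (by positivity)] at hn
    obtain ⟨X, hX, hle⟩ := it n
    have := hc X hX
    linarith

noncomputable def wv (α μ x : Fin d → ℝ) (κ : ℝ) : Fin 3 → Fin d → ℝ := ![α, μ, fun i => κ - x i.rev]

lemma conj_shift {W : Matrix (Fin d) (Fin d) ℂ} (hW : IsU W) (κ : ℝ) (y : Fin d → ℝ) :
    W * dg (fun i => κ - y i) * Wᴴ = (κ : ℂ) • 1 - W * dg y * Wᴴ := by
  have e : dg (fun i => κ - y i) = (κ : ℂ) • 1 - dg y := by
    ext a b
    by_cases hab : a = b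
    · subst hab; simp [dg]
    · simp [dg, hab]
  rw [e, Matrix.mul_sub, Matrix.sub_mul, Matrix.mul_smul, Matrix.mul_one, Matrix.smul_mul, hW.2]

lemma solv_of_sum {A B : Matrix (Fin d) (Fin d) ℂ} (hA : A.IsHermitian) (hB : B.IsHermitian) (κ : ℝ) :
    Solv (wv (eigsDesc A) (eigsDesc B) (eigsDesc (A + B)) κ) κ := by
  obtain ⟨U, hU, hUA⟩ := spectral_sorted hA
  obtain ⟨V, hV, hVB⟩ := spectral_sorted hB
  obtain ⟨W, hW, hWC⟩ := spectral_sorted (hA.add hB)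
  obtain ⟨P, hP, hPe⟩ := perm_conj (eigsDesc (A + B)) Fin.revPerm
  refine ⟨![U, V, W * P], ?_, ?_⟩
  · intro j
    fin_cases j
    · exact hU
    · exact hV
    · exact hW.mul hP
  · rw [Fin.sum_univ_three]
    simp only [wv, Matrix.cons_val_zero, Matrix.cons_val_one, Matrix.cons_val]
    rw [← hUA, ← hVB, conj_shift (hW.mul hP) κ (fun i => eigsDesc (A + B) i.rev)]
    have : (W * P) * dg (fun i => eigsDesc (A + B) i.rev) * (W * P)ᴴ = A + B := by
      have e : (fun i => eigsDesc (A + B) i.rev) = eigsDesc (A+B) ∘ Fin.revPerm := by ext i; simp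
      calc _ = W * (P * dg (eigsDesc (A+B) ∘ Fin.revPerm) * Pᴴ) * Wᴴ := by
            rw [e, conjTranspose_mul]; simp only [Matrix.mul_assoc]
        _ = _ := by rw [← hPe, ← hWC]
    rw [this]; abel

lemma sum_of_solv {A : Matrix (Fin d) (Fin d) ℂ} (hA : A.IsHermitian) {μ x : Fin d → ℝ} (hμ : Antitone μ)
    (hx : Antitone x) {κ : ℝ} (h : Solv (wv (eigsDesc A) μ x κ) κ) :
    ∃ B : Matrix (Fin d) (Fin d) ℂ, B.IsHermitian ∧ eigsDesc B = μ ∧ x = eigsDesc (A + B) := by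
  obtain ⟨U, hU, hs⟩ := h
  obtain ⟨V, hV, hVA⟩ := spectral_sorted hA
  rw [Fin.sum_univ_three] at hs
  simp only [wv, Matrix.cons_val_zero, Matrix.cons_val_one, Matrix.cons_val] at hs
  rw [conj_shift (hU 2) κ (fun i => x i.rev)] at hs
  have hs' : U 0 * dg (eigsDesc A) * (U 0)ᴴ + U 1 * dg μ * (U 1)ᴴ = U 2 * dg (fun i => x i.rev) * (U 2)ᴴ := by
    have : U 0 * dg (eigsDesc A) * (U 0)ᴴ + U 1 * dg μ * (U 1)ᴴ =
      (U 0 * dg (eigsDesc A) * (U 0)ᴴ + U 1 * dg μ * (U 1)ᴴ + ((κ : ℂ) • 1 - U 2 * dg (fun i => x i.rev) * (U 2)ᴴ)) - (κ : ℂ) • 1 + U 2 * dg (fun i => x i.rev) * (U 2)ᴴ := by abel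
    rw [this, hs]; abel
  obtain ⟨R, hR⟩ : ∃ R, R = V * (U 0)ᴴ := ⟨_, rfl⟩
  have hRU : IsU R := hR ▸ hV.mul (hU 0).ct
  have hRA : A = R * (U 0 * dg (eigsDesc A) * (U 0)ᴴ) * Rᴴ := by
    have e1 : R * U 0 = V := by rw [hR, Matrix.mul_assoc, (hU 0).1, Matrix.mul_one]
    calc A = V * dg (eigsDesc A) * Vᴴ := hVA
      _ = (R * U 0) * dg (eigsDesc A) * (R * U 0)ᴴ := by rw [e1]
      _ = _ := by rw [conjTranspose_mul]; simp only [Matrix.mul_assoc]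
  have hRB : ∀ (W : Matrix (Fin d) (Fin d) ℂ) (y : Fin d → ℝ), R * (W * dg y * Wᴴ) * Rᴴ = (R * W) * dg y * (R * W)ᴴ := by
    intro W y; rw [conjTranspose_mul]; simp only [Matrix.mul_assoc]
  refine ⟨R * (U 1 * dg μ * (U 1)ᴴ) * Rᴴ, ?_, ?_, ?_⟩
  · rw [hRB]; exact conj_herm _
  · rw [hRB, eigsDesc_conj (hRU.mul (hU 1)), sortDesc_of_antitone hμ]
  · have : A + R * (U 1 * dg μ * (U 1)ᴴ) * Rᴴ = (R * U 2) * dg (fun i => x i.rev) * (R * U 2)ᴴ := by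
      rw [← hRB, ← hs', Matrix.mul_add, Matrix.add_mul, ← hRA]
    rw [this, eigsDesc_conj (hRU.mul (hU 2))]
    have e : (fun i : Fin d => x i.rev) = x ∘ Fin.revPerm := by ext i; simp
    rw [e, sortDesc_congr (map_comp_perm x Fin.revPerm), sortDesc_of_antitone hx]

lemma gap_comb (a b : ℝ) (x y : Fin d → ℝ) (i : Fin d) :
    gap (fun i => a * x i + b * y i) i = a * gap x i + b * gap y i := by
  unfold gap
  split <;> ring

lemma wv_gap {α μ x : Fin d → ℝ} {κ : ℝ} (hα : Antitone α) (hα0 : ∀ i, 0 ≤ α i) (hμ : Antitone μ) (hμ0 : ∀ i, 0 ≤ μ i)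
    (hx : Antitone x) (hxκ : ∀ i, x i ≤ κ) : ∀ j i, 0 ≤ gap (wv α μ x κ j) i := by
  intro j
  fin_cases j
  · exact gap_nonneg hα hα0
  · exact gap_nonneg hμ hμ0
  · refine gap_nonneg ?_ ?_
    · intro a b hab
      have := hx (Fin.rev_le_rev.mpr hab)
      simp only
      exact sub_le_sub_left this κ
    · intro i; exact sub_nonneg.mpr (hxκ _)

lemma wv_comb {α μ x y : Fin d → ℝ} {κ a b : ℝ} (hab : a + b = 1) (j : Fin 3) (i : Fin d) :
    wv α μ (a • x + b • y) κ j i = a * wv α μ x κ j i + b * wv α μ y κ j i := by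
  have hb : b = 1 - a := by linarith
  subst hb
  fin_cases j <;> simp [wv] <;> ring

lemma convex_sum {A : Matrix (Fin d) (Fin d) ℂ} (hA : A.PosSemidef) {μ : Fin d → ℝ} (hμ : Antitone μ) (hμ0 : ∀ i, 0 ≤ μ i) :
    Convex ℝ {x : Fin d → ℝ | ∃ B : Matrix (Fin d) (Fin d) ℂ, B.IsHermitian ∧ eigsDesc B = μ ∧ x = eigsDesc (A + B)} := by
  rintro x ⟨B, hB, hBμ, hx⟩ y ⟨B', hB', hBμ', hy⟩ a b ha hb hab
  obtain ⟨H, hH, hsemi⟩ := generic_H (J := Fin 3) d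
  have hα0 : ∀ i, 0 ≤ eigsDesc A i := by
    intro i
    rw [eigsDesc, dif_pos hA.1, sortDesc_eq_comp]
    exact hA.eigenvalues_nonneg _
  have hxa : Antitone x := hx ▸ eigsDesc_antitone _
  have hya : Antitone y := hy ▸ eigsDesc_antitone _
  obtain ⟨κ, hκ⟩ : ∃ κ, κ = (∑ i, |x i|) + ∑ i, |y i| := ⟨_, rfl⟩
  have hsx : 0 ≤ ∑ i, |x i| := Finset.sum_nonneg (fun _ _ => abs_nonneg _)
  have hsy : 0 ≤ ∑ i, |y i| := Finset.sum_nonneg (fun _ _ => abs_nonneg _)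
  have hκ0 : 0 ≤ κ := by rw [hκ]; linarith
  have hxκ : ∀ i, x i ≤ κ := by
    intro i
    have := Finset.single_le_sum (f := fun i => |x i|) (fun _ _ => abs_nonneg _) (Finset.mem_univ i)
    have h2 := le_abs_self (x i)
    linarith
  have hyκ : ∀ i, y i ≤ κ := by
    intro i
    have := Finset.single_le_sum (f := fun i => |y i|) (fun _ _ => abs_nonneg _) (Finset.mem_univ i)
    have h2 := le_abs_self (y i)
    linarith
  have hgx := wv_gap (eigsDesc_antitone A) hα0 hμ hμ0 hxa hxκ
  have hgy := wv_gap (eigsDesc_antitone A) hα0 hμ hμ0 hya hyκ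
  have hSx : Solv (wv (eigsDesc A) μ x κ) κ := by
    have := solv_of_sum hA.1 hB κ
    rwa [hBμ, ← hx] at this
  have hSy : Solv (wv (eigsDesc A) μ y κ) κ := by
    have := solv_of_sum hA.1 hB' κ
    rwa [hBμ', ← hy] at this
  have trs : ∀ w : Fin 3 → Fin d → ℝ, Solv w κ → ∑ j, ∑ i, w j i = κ * d := by
    rintro w ⟨U, hU, hs⟩
    have h1 := congrArg Matrix.trace hs
    rw [trace_sum] at h1
    have : ∀ j, (U j * dg (w j) * (U j)ᴴ).trace = ((∑ i, w j i : ℝ) : ℂ) := by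
      intro j; rw [trace_conjU (hU j), trace_dg]
    simp only [this, trace_smul, trace_one, Fintype.card_fin, smul_eq_mul] at h1
    exact_mod_cast h1
  have hwc : ∀ j, wv (eigsDesc A) μ (a • x + b • y) κ j = fun i => a * wv (eigsDesc A) μ x κ j i + b * wv (eigsDesc A) μ y κ j i :=
    fun j => funext (fun i => wv_comb hab j i)
  have hgap : ∀ j i, gap (wv (eigsDesc A) μ (a • x + b • y) κ j) i = a * gap (wv (eigsDesc A) μ x κ j) i + b * gap (wv (eigsDesc A) μ y κ j) i := by
    intro j i; rw [hwc, gap_comb]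
  have hza : Antitone (a • x + b • y) := by
    intro i j hij
    have h1 := mul_le_mul_of_nonneg_left (hxa hij) ha
    have h2 := mul_le_mul_of_nonneg_left (hya hij) hb
    simp only [Pi.add_apply, Pi.smul_apply, smul_eq_mul]
    linarith
  apply sum_of_solv hA.1 hμ hza (κ := κ)
  apply solv_of_semi hκ0 hH
  · intro j i
    rw [hgap]
    exact add_nonneg (mul_nonneg ha (hgx j i)) (mul_nonneg hb (hgy j i))
  · intro m p hp
    have h1 := mul_le_mul_of_nonneg_left (hsemi _ κ hgx hSx m p hp) ha
    have h2 := mul_le_mul_of_nonneg_left (hsemi _ κ hgy hSy m p hp) hb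
    have e : ∑ j, ∑ i, gap (wv (eigsDesc A) μ (a • x + b • y) κ j) i * ((p * ld (H j) i).rank : ℝ) =
        a * ∑ j, ∑ i, gap (wv (eigsDesc A) μ x κ j) i * ((p * ld (H j) i).rank : ℝ) +
        b * ∑ j, ∑ i, gap (wv (eigsDesc A) μ y κ j) i * ((p * ld (H j) i).rank : ℝ) := by
      simp only [hgap, Finset.mul_sum, ← Finset.sum_add_distrib]
      apply Finset.sum_congr rfl; intro j _
      apply Finset.sum_congr rfl; intro i _
      ring
    rw [e]
    have e2 : κ * (m:ℝ) = a * (κ * m) + b * (κ * m) := by rw [← add_mul, hab, one_mul]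
    rw [e2]
    exact add_le_add h1 h2
  · simp only [hwc, Finset.sum_add_distrib, ← Finset.mul_sum]
    rw [trs _ hSx, trs _ hSy, ← add_mul, hab, one_mul]

end HC
end

theorem stmt_2 {d n₀ k : ℕ} (F₀ : Fin n₀ → Fin d → ℂ) (a : Fin k → ℝ)
    (ha_pos : ∀ i, 0 < a i) (ha_mono : Antitone a)
    (hk : d - (frameOp F₀).rank ≤ k)
    (μ : Fin d → ℝ) (hμ : μ ∈ Gamma d a) :
    Convex ℝ {x : Fin d → ℝ | ∃ G : Fin k → Fin d → ℂ,
        (∀ i, normSqVec (G i) = a i) ∧ eigsDesc (frameOp G) = μ ∧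
        x = eigsDesc (frameOp F₀ + frameOp G)} ∧
    (sortDesc (fun i => eigsAsc (frameOp F₀) i + μ i) ∈
        {x : Fin d → ℝ | ∃ G : Fin k → Fin d → ℂ,
          (∀ i, normSqVec (G i) = a i) ∧ eigsDesc (frameOp G) = μ ∧
          x = eigsDesc (frameOp F₀ + frameOp G)} ∧
      ∀ G : Fin k → Fin d → ℂ, (∀ i, normSqVec (G i) = a i) → eigsDesc (frameOp G) = μ →
        MajorizedBy (sortDesc (fun i => eigsAsc (frameOp F₀) i + μ i))
          (eigsDesc (frameOp F₀ + frameOp G))) ∧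
    (∀ G : Fin k → Fin d → ℂ, (∀ i, normSqVec (G i) = a i) → eigsDesc (frameOp G) = μ →
      eigsDesc (frameOp F₀ + frameOp G) = sortDesc (fun i => eigsAsc (frameOp F₀) i + μ i) →
      frameOp F₀ * frameOp G = frameOp G * frameOp F₀) := by
  have hA := HC.frameOp_herm F₀
  obtain ⟨hμa, hμ0, _⟩ := id hμ
  refine ⟨?_, ⟨?_, ?_⟩, ?_⟩
  · convert HC.convex_sum hA hμa hμ0 using 1
    ext x
    constructor
    · rintro ⟨G, hG, hGμ, hx⟩
      exact ⟨frameOp G, (HC.frameOp_herm G).1, hGμ, hx⟩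
    · rintro ⟨B, hB, hBμ, hx⟩
      obtain ⟨G, hG, hGB⟩ := HC.exists_frame ha_pos ha_mono hμ hB hBμ
      subst hGB
      exact ⟨G, hG, hBμ, hx⟩
  · obtain ⟨B, hB, hBμ, hx⟩ := HC.nu_exists hA.1 hμa
    obtain ⟨G, hG, hGB⟩ := HC.exists_frame ha_pos ha_mono hμ hB hBμ
    subst hGB
    exact ⟨G, hG, hBμ, hx.symm⟩
  · intro G hG hGμ
    have h := HC.eigs_sum_major hA.1 (HC.frameOp_herm G).1
    rw [hGμ] at h
    exact h
  · intro G hG hGμ h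
    apply HC.commute_of_eq hA.1 (HC.frameOp_herm G).1
    rw [hGμ]
    exact h
end
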